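/- arXiv:1902.01165 — 2 statements merged into one kernel-verified Lean document; each statement's English description precedes it below -/
import Mathlib

section
/- Let the general recurrent-IFS interpolation setup hold and assume the matchable conditions. Let C*(I×J) be the set of continuous functions φ on I×J with φ(x_i,y_j)=z_{ij} for all i,j, equipped with the sup metric. Then the map T given by Tφ(x,y)=F_{ij}(u_i^{-1}(x),v_j^{-1}(y),φ(u_i^{-1}(x),v_j^{-1}(y))) for (x,y)∈D_{ij} is a well-defined map from C*(I×J) to itself (in particular the values on common boundaries of the D_{ij} agree), and T is a contraction: for all φ,ψ∈C*(I×J), sup|Tφ−Tψ| ≤ α·sup|φ−ψ|, where α = max_{i,j} α_{ij} < 1. -/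
/- General recurrent-IFS interpolation setup (Liang–Ruan,
   "Construction and box dimension of recurrent fractal interpolation surfaces"). -/

noncomputable section
open Set

/-- Data of the general recurrent-IFS interpolation setup: grid points `x i`, `y j`
(for `i ≤ N`, `j ≤ M`), interpolation values `z i j`, index maps `px`, `py` selecting
the points `x' i = x (px i)`, `y' j = y (py j)`, the horizontal contractions `u i`, `v j`,
the maps `F i j`, and the contraction ratios `alpha i j`. -/
structure GenData where
  N : ℕ
  M : ℕ
  x : ℕ → ℝ
  y : ℕ → ℝ
  z : ℕ → ℕ → ℝ
  px : ℕ → ℕ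
  py : ℕ → ℕ
  u : ℕ → ℝ → ℝ
  v : ℕ → ℝ → ℝ
  F : ℕ → ℕ → ℝ → ℝ → ℝ → ℝ
  alpha : ℕ → ℕ → ℝ

namespace GenData

def x' (D : GenData) (i : ℕ) : ℝ := D.x (D.px i)
def y' (D : GenData) (j : ℕ) : ℝ := D.y (D.py j)
def I (D : GenData) : Set ℝ := Icc (D.x 0) (D.x D.N)
def J (D : GenData) : Set ℝ := Icc (D.y 0) (D.y D.M)
def Ii (D : GenData) (i : ℕ) : Set ℝ := Icc (D.x (i - 1)) (D.x i)
def Jj (D : GenData) (j : ℕ) : Set ℝ := Icc (D.y (j - 1)) (D.y j)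
def Dij (D : GenData) (i j : ℕ) : Set (ℝ × ℝ) := D.Ii i ×ˢ D.Jj j
def Ii' (D : GenData) (i : ℕ) : Set ℝ := uIcc (D.x' (i - 1)) (D.x' i)
def Jj' (D : GenData) (j : ℕ) : Set ℝ := uIcc (D.y' (j - 1)) (D.y' j)
def Dij' (D : GenData) (i j : ℕ) : Set (ℝ × ℝ) := D.Ii' i ×ˢ D.Jj' j
def z' (D : GenData) (i j : ℕ) : ℝ := D.z (D.px i) (D.py j)

/-- Hypotheses on the grid data: `N, M ≥ 2`, increasing grids, `x' i` chosen from the grid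
with `|x'_i - x'_{i-1}| > x_i - x_{i-1}`, and each `u i` (resp. `v j`) a contractive
homeomorphism from `I'_i` onto `I_i` (resp. `J'_j` onto `J_j`) with the endpoint conditions. -/
structure GridHyp (D : GenData) : Prop where
  hN : 2 ≤ D.N
  hM : 2 ≤ D.M
  hx : ∀ i < D.N, D.x i < D.x (i + 1)
  hy : ∀ j < D.M, D.y j < D.y (j + 1)
  hpx : ∀ i ≤ D.N, D.px i ≤ D.N
  hpy : ∀ j ≤ D.M, D.py j ≤ D.M
  hgapx : ∀ i, 1 ≤ i → i ≤ D.N → D.x i - D.x (i - 1) < |D.x' i - D.x' (i - 1)|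
  hgapy : ∀ j, 1 ≤ j → j ≤ D.M → D.y j - D.y (j - 1) < |D.y' j - D.y' (j - 1)|
  hu : ∀ i, 1 ≤ i → i ≤ D.N →
    (∃ c, 0 ≤ c ∧ c < 1 ∧ ∀ s ∈ D.Ii' i, ∀ t ∈ D.Ii' i, |D.u i s - D.u i t| ≤ c * |s - t|) ∧
    Set.BijOn (D.u i) (D.Ii' i) (D.Ii i) ∧
    D.u i (D.x' (i - 1)) = D.x (i - 1) ∧ D.u i (D.x' i) = D.x i
  hv : ∀ j, 1 ≤ j → j ≤ D.M →
    (∃ c, 0 ≤ c ∧ c < 1 ∧ ∀ s ∈ D.Jj' j, ∀ t ∈ D.Jj' j, |D.v j s - D.v j t| ≤ c * |s - t|) ∧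
    Set.BijOn (D.v j) (D.Jj' j) (D.Jj j) ∧
    D.v j (D.y' (j - 1)) = D.y (j - 1) ∧ D.v j (D.y' j) = D.y j

/-- Hypotheses on the maps `F i j`: continuity on `D'_{ij} × ℝ`, the interpolation
(corner) conditions, and the uniform contraction in the third variable. -/
structure FHyp (D : GenData) : Prop where
  hFcont : ∀ i j, 1 ≤ i → i ≤ D.N → 1 ≤ j → j ≤ D.M →
    ContinuousOn (fun p : (ℝ × ℝ) × ℝ => D.F i j p.1.1 p.1.2 p.2) (D.Dij' i j ×ˢ (univ : Set ℝ))
  hFval : ∀ i j, 1 ≤ i → i ≤ D.N → 1 ≤ j → j ≤ D.M →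
    ∀ k ∈ ({i - 1, i} : Set ℕ), ∀ l ∈ ({j - 1, j} : Set ℕ),
      D.F i j (D.x' k) (D.y' l) (D.z' k l) = D.z k l
  halpha : ∀ i j, 1 ≤ i → i ≤ D.N → 1 ≤ j → j ≤ D.M → 0 < D.alpha i j ∧ D.alpha i j < 1
  hFlip : ∀ i j, 1 ≤ i → i ≤ D.N → 1 ≤ j → j ≤ D.M →
    ∀ p ∈ D.Dij' i j, ∀ z1 z2 : ℝ,
      |D.F i j p.1 p.2 z1 - D.F i j p.1 p.2 z2| ≤ D.alpha i j * |z1 - z2|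

/-- The matchable conditions.  Here `x* = u_i⁻¹(x_i) = u_{i+1}⁻¹(x_i) = x'_i` and
`y* = v_j⁻¹(y_j) = v_{j+1}⁻¹(y_j) = y'_j` (since `u i (x' i) = u (i+1) (x' i) = x i`
and `u i`, `u (i+1)` are injective, and similarly for `v`). -/
def Matchable (D : GenData) : Prop :=
  (∀ i j, 1 ≤ i → i < D.N → 1 ≤ j → j ≤ D.M →
    ∀ t ∈ D.Jj' j, ∀ w : ℝ, D.F i j (D.x' i) t w = D.F (i + 1) j (D.x' i) t w) ∧
  (∀ i j, 1 ≤ i → i ≤ D.N → 1 ≤ j → j < D.M →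
    ∀ t ∈ D.Ii' i, ∀ w : ℝ, D.F i j t (D.y' j) w = D.F i (j + 1) t (D.y' j) w)

/-- `f` is a recurrent fractal interpolation function for the data: it is continuous on
`I × J`, interpolates the data, and satisfies the self-referential equation
`f (u_i x, v_j y) = F_{ij} (x, y, f (x, y))` on each `D'_{ij}` (equivalently, the pieces
of its graph form the invariant set of the recurrent IFS `{W_{ij}}`). -/
def IsRFIF (D : GenData) (f : ℝ × ℝ → ℝ) : Prop :=
  ContinuousOn f (D.I ×ˢ D.J) ∧
  (∀ i ≤ D.N, ∀ j ≤ D.M, f (D.x i, D.y j) = D.z i j) ∧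
  (∀ i j, 1 ≤ i → i ≤ D.N → 1 ≤ j → j ≤ D.M →
    ∀ p ∈ D.Dij' i j, f (D.u i p.1, D.v j p.2) = D.F i j p.1 p.2 (f p))

end GenData

namespace GenData

/-- `α = max_{i,j} α_{ij}` (as the supremum over the finite index range). -/
noncomputable def alphaMax (D : GenData) : ℝ :=
  sSup {a : ℝ | ∃ i j, 1 ≤ i ∧ i ≤ D.N ∧ 1 ≤ j ∧ j ≤ D.M ∧ a = D.alpha i j}

/-- Membership in `C*(I × J)`: continuity on `I × J` together with the interpolation
conditions `φ(x_i, y_j) = z_{ij}`. -/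
def InterpSp (D : GenData) (φ : ℝ × ℝ → ℝ) : Prop :=
  ContinuousOn φ (D.I ×ˢ D.J) ∧ ∀ i ≤ D.N, ∀ j ≤ D.M, φ (D.x i, D.y j) = D.z i j

end GenData

/-! The disjoint union of the rectangles `D'_{ij}` is compact, and the maps
`(x, y) ↦ (u_i x, v_j y)` assemble to a continuous surjection of it onto `I × J`, which is
therefore a quotient map. The function `(i, j, q) ↦ F_{ij}(q, φ(q))` on the disjoint union is
continuous, so `Tφ` exists and is continuous as soon as this function factors through the
quotient. Two different subintervals meet only at a common node `x_i`, whose preimages under `u_i`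
and `u_{i+1}` are both `x'_i`; hence only equality of adjacent maps `F_{ij}` over `x'_i` and over
`y'_j` is needed, one coordinate at a time, and this is matchability. -/

theorem continuousOn_range_of_comp {S X Y : Type*} [TopologicalSpace S] [CompactSpace S]
    [TopologicalSpace X] [T2Space X] [TopologicalSpace Y] {π : S → X} {f : X → Y}
    (hπ : Continuous π) (hf : Continuous (f ∘ π)) : ContinuousOn f (range π) := by
  have quotient : Topology.IsQuotientMap (rangeFactorization π) :=
    .of_surjective_continuous rangeFactorization_surjective hπ.rangeFactorization
  exact continuousOn_iff_continuous_domRestrict.2 (quotient.continuous_iff.2 hf)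

section ReadBajraktarevic

variable {ι X Z : Type*} {K : ι → Set X} {w : ι → X → X} {G : ι → X → Z → Z} {φ ψ : X → Z}

/-- The Read–Bajraktarević operator of a system of pieces `w i : K i → X` and fibre maps `G i`:
`Tφ (w i q) = G i q (φ q)` for `q ∈ K i`. Off the images of the pieces `Tφ` is `φ`. Without
`PiecesAgree` the value at a point common to several images is an arbitrary choice among theirs. -/
def readBajraktarevic (K : ι → Set X) (w : ι → X → X) (G : ι → X → Z → Z) (φ : X → Z) : X → Z :=
  Function.extend (fun s : Σ i, K i ↦ w s.1 s.2) (fun s ↦ G s.1 s.2 (φ s.2)) φ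

/-- Matchability of a system of pieces: where the images of two pieces meet, the preimages
coincide and the two fibre maps over them are equal. -/
def PiecesAgree (K : ι → Set X) (w : ι → X → X) (G : ι → X → Z → Z) : Prop :=
  ∀ i j, ∀ q ∈ K i, ∀ r ∈ K j, w i q = w j r → q = r ∧ G i q = G j r

theorem readBajraktarevic_apply (h : PiecesAgree K w G) (φ : X → Z) {i : ι} {q : X}
    (hq : q ∈ K i) : readBajraktarevic K w G φ (w i q) = G i q (φ q) := by
  have factors : (fun s : Σ i, K i ↦ G s.1 s.2 (φ s.2)).FactorsThrough
      (fun s : Σ i, K i ↦ w s.1 s.2) := by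
    rintro ⟨i, q, hq⟩ ⟨j, r, hr⟩ hqr
    obtain ⟨rfl, hG⟩ := h i j q hq r hr hqr
    exact congrFun hG (φ q)
  exact factors.extend_apply φ ⟨i, q, hq⟩

theorem continuousOn_readBajraktarevic [Finite ι] [TopologicalSpace X] [T2Space X]
    [TopologicalSpace Z] (h : PiecesAgree K w G) (hK : ∀ i, IsCompact (K i))
    (hw : ∀ i, ContinuousOn (w i) (K i))
    (hG : ∀ i, ContinuousOn (fun p : X × Z ↦ G i p.1 p.2) (K i ×ˢ univ))
    (hφ : ∀ i, ContinuousOn φ (K i)) :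
    ContinuousOn (readBajraktarevic K w G φ) (⋃ i, w i '' K i) := by
  have (i : ι) : CompactSpace (K i) := isCompact_iff_compactSpace.1 (hK i)
  have pieces : Continuous fun s : Σ i, K i ↦ w s.1 s.2 :=
    continuous_sigma fun i ↦ (hw i).domRestrict
  have pullback : Continuous
      (readBajraktarevic K w G φ ∘ fun s : Σ i, K i ↦ w s.1 s.2) := by
    refine continuous_sigma fun i ↦ ?_
    have fibre : ContinuousOn (fun q ↦ G i q (φ q)) (K i) :=
      (hG i).comp (continuousOn_id.prodMk (hφ i)) fun q hq ↦ ⟨hq, mem_univ _⟩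
    exact fibre.domRestrict.congr fun q ↦ (readBajraktarevic_apply h φ q.2).symm
  refine (continuousOn_range_of_comp pieces pullback).mono (iUnion_subset fun i ↦ ?_)
  rintro _ ⟨q, hq, rfl⟩
  exact ⟨⟨i, q, hq⟩, rfl⟩

theorem dist_readBajraktarevic_le [PseudoMetricSpace Z] (h : PiecesAgree K w G) {α b : ℝ}
    (hα : 0 ≤ α) (hG : ∀ i, ∀ q ∈ K i, ∀ z z', dist (G i q z) (G i q z') ≤ α * dist z z')
    (hb : ∀ i, ∀ q ∈ K i, dist (φ q) (ψ q) ≤ b) {p : X} (hp : p ∈ ⋃ i, w i '' K i) :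
    dist (readBajraktarevic K w G φ p) (readBajraktarevic K w G ψ p) ≤ α * b := by
  obtain ⟨i, q, hq, rfl⟩ := mem_iUnion.1 hp
  rw [readBajraktarevic_apply h φ hq, readBajraktarevic_apply h ψ hq]
  exact (hG i q hq _ _).trans (mul_le_mul_of_nonneg_left (hb i q hq) hα)

end ReadBajraktarevic

theorem Icc_subset_iUnion_Icc_pred {α : Type*} [LinearOrder α] (x : ℕ → α) {N : ℕ} (hN : 1 ≤ N) :
    Icc (x 0) (x N) ⊆ ⋃ i : Icc 1 N, Icc (x (i - 1)) (x i) := by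
  intro t ht
  suffices ∃ i, (1 ≤ i ∧ i ≤ N) ∧ t ∈ Icc (x (i - 1)) (x i) by
    obtain ⟨i, hi, hti⟩ := this
    exact mem_iUnion.2 ⟨⟨i, hi⟩, hti⟩
  induction N, hN using Nat.le_induction with
  | base => exact ⟨1, ⟨le_rfl, le_rfl⟩, ht⟩
  | succ n _ ih =>
    rcases le_total t (x n) with htn | hnt
    · obtain ⟨i, hi, hti⟩ := ih ⟨ht.1, htn⟩
      exact ⟨i, ⟨hi.1, hi.2.trans n.le_succ⟩, hti⟩
    · exact ⟨n + 1, ⟨n.succ_pos, le_rfl⟩, hnt, ht.2⟩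

/-- The one-dimensional part of the setup: a partition `x 0 < ⋯ < x N` and, for `1 ≤ i ≤ N`, a
homeomorphism `u i` from the interval between the nodes `x (p (i - 1))` and `x (p i)` onto
`[x (i - 1), x i]` matching these endpoints in order. -/
structure RecurrentPartition {α : Type*} [LinearOrder α] [TopologicalSpace α] (N : ℕ)
    (x : ℕ → α) (p : ℕ → ℕ) (u : ℕ → α → α) : Prop where
  one_le : 1 ≤ N
  strictMonoOn : StrictMonoOn x (Iic N)
  index_le : ∀ i ≤ N, p i ≤ N
  continuousOn : ∀ i ∈ Icc 1 N, ContinuousOn (u i) (uIcc (x (p (i - 1))) (x (p i)))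
  bijOn : ∀ i ∈ Icc 1 N, BijOn (u i) (uIcc (x (p (i - 1))) (x (p i))) (Icc (x (i - 1)) (x i))
  map_left : ∀ i ∈ Icc 1 N, u i (x (p (i - 1))) = x (i - 1)
  map_right : ∀ i ∈ Icc 1 N, u i (x (p i)) = x i

namespace RecurrentPartition

variable {α : Type*} [LinearOrder α] [TopologicalSpace α] {N : ℕ} {x : ℕ → α} {p : ℕ → ℕ}
  {u : ℕ → α → α} {i k : ℕ} {s t : α}

theorem source_subset (h : RecurrentPartition N x p u) (hi : i ≤ N) :
    uIcc (x (p (i - 1))) (x (p i)) ⊆ Icc (x 0) (x N) := by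
  have node_mem {k : ℕ} (hk : k ≤ N) : x (p k) ∈ Icc (x 0) (x N) :=
    have hpk : p k ≤ N := h.index_le k hk
    ⟨h.strictMonoOn.monotoneOn N.zero_le hpk (p k).zero_le,
      h.strictMonoOn.monotoneOn hpk self_mem_Iic hpk⟩
  exact uIcc_subset_Icc (node_mem ((i.sub_le 1).trans hi)) (node_mem hi)

theorem subset_iUnion_image (h : RecurrentPartition N x p u) :
    Icc (x 0) (x N) ⊆ ⋃ i : Icc 1 N, u i '' uIcc (x (p (i - 1))) (x (p i)) := by
  simpa only [(h.bijOn _ (Subtype.prop _)).image_eq] using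
    Icc_subset_iUnion_Icc_pred x h.one_le

theorem exists_source_of_node (h : RecurrentPartition N x p u) (hk : k ≤ N) :
    ∃ i ∈ Icc 1 N, k ∈ ({i - 1, i} : Set ℕ) ∧
      x (p k) ∈ uIcc (x (p (i - 1))) (x (p i)) ∧ u i (x (p k)) = x k := by
  rcases k.eq_zero_or_pos with rfl | hk0
  · have one_mem : 1 ∈ Icc 1 N := ⟨le_rfl, h.one_le⟩
    exact ⟨1, one_mem, .inl rfl, left_mem_uIcc, h.map_left 1 one_mem⟩
  · exact ⟨k, ⟨hk0, hk⟩, .inr rfl, right_mem_uIcc, h.map_right k ⟨hk0, hk⟩⟩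

theorem eq_node_of_map_eq_of_lt (h : RecurrentPartition N x p u)
    (hi : i ∈ Icc 1 N) (hk : k ∈ Icc 1 N) (hik : i < k)
    (hs : s ∈ uIcc (x (p (i - 1))) (x (p i))) (ht : t ∈ uIcc (x (p (k - 1))) (x (p k)))
    (hst : u i s = u k t) : k = i + 1 ∧ s = x (p i) ∧ t = x (p i) := by
  have hs_le : u i s ≤ x i := ((h.bijOn i hi).mapsTo hs).2
  have hle_t : x (k - 1) ≤ u k t := ((h.bijOn k hk).mapsTo ht).1
  have hki : k - 1 ≤ i :=
    (h.strictMonoOn.le_iff_le ((k.sub_le 1).trans hk.2) hi.2).1 (hle_t.trans (hst ▸ hs_le))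
  obtain rfl : k = i + 1 := by omega
  rw [Nat.add_sub_cancel] at hle_t ht
  have left_endpoint := h.map_left (i + 1) hk
  rw [Nat.add_sub_cancel] at left_endpoint
  refine ⟨rfl, (h.bijOn i hi).injOn hs right_mem_uIcc ?_,
    (h.bijOn (i + 1) hk).injOn ht left_mem_uIcc ?_⟩
  · rw [h.map_right i hi]
    exact hs_le.antisymm (hst ▸ hle_t)
  · rw [left_endpoint]
    exact (hst ▸ hs_le).antisymm hle_t

theorem apply_eq_of_map_eq (h : RecurrentPartition N x p u) {β : Type*} {f : ℕ → α → β}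
    (hf : ∀ i, 1 ≤ i → i < N → f i (x (p i)) = f (i + 1) (x (p i)))
    (hi : i ∈ Icc 1 N) (hk : k ∈ Icc 1 N)
    (hs : s ∈ uIcc (x (p (i - 1))) (x (p i))) (ht : t ∈ uIcc (x (p (k - 1))) (x (p k)))
    (hst : u i s = u k t) : f i s = f k t := by
  wlog hik : i ≤ k generalizing i k s t
  · exact (this hk hi ht hs hst.symm (le_of_not_ge hik)).symm
  rcases hik.eq_or_lt with rfl | hlt
  · rw [(h.bijOn i hi).injOn hs ht hst]
  · obtain ⟨rfl, rfl, rfl⟩ := h.eq_node_of_map_eq_of_lt hi hk hlt hs ht hst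
    exact hf i hi.1 hk.2

end RecurrentPartition

namespace GenData

variable {D : GenData}

/-- The grid part of the setup with the maps `u i`, `v j` merely homeomorphisms between the
corresponding intervals, not necessarily contractive. -/
structure RecurrentGrid (D : GenData) : Prop where
  horizontal : RecurrentPartition D.N D.x D.px D.u
  vertical : RecurrentPartition D.M D.y D.py D.v

theorem GridHyp.recurrentGrid (h : D.GridHyp) : D.RecurrentGrid where
  horizontal := {
    one_le := one_le_two.trans h.hN
    strictMonoOn := strictMonoOn_Iic_of_lt_succ h.hx
    index_le := h.hpx
    continuousOn i hi := by
      obtain ⟨⟨c, hc, -, hlip⟩, -⟩ := h.hu i hi.1 hi.2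
      exact (LipschitzOnWith.of_dist_le_mul (K := ⟨c, hc⟩) hlip).continuousOn
    bijOn i hi := (h.hu i hi.1 hi.2).2.1
    map_left i hi := (h.hu i hi.1 hi.2).2.2.1
    map_right i hi := (h.hu i hi.1 hi.2).2.2.2 }
  vertical := {
    one_le := one_le_two.trans h.hM
    strictMonoOn := strictMonoOn_Iic_of_lt_succ h.hy
    index_le := h.hpy
    continuousOn j hj := by
      obtain ⟨⟨c, hc, -, hlip⟩, -⟩ := h.hv j hj.1 hj.2
      exact (LipschitzOnWith.of_dist_le_mul (K := ⟨c, hc⟩) hlip).continuousOn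
    bijOn j hj := (h.hv j hj.1 hj.2).2.1
    map_left j hj := (h.hv j hj.1 hj.2).2.2.1
    map_right j hj := (h.hv j hj.1 hj.2).2.2.2 }

theorem finite_alpha (D : GenData) :
    {a : ℝ | ∃ i j, 1 ≤ i ∧ i ≤ D.N ∧ 1 ≤ j ∧ j ≤ D.M ∧ a = D.alpha i j}.Finite := by
  refine (((finite_Icc 1 D.N).prod (finite_Icc 1 D.M)).image fun k ↦ D.alpha k.1 k.2).subset ?_
  rintro a ⟨i, j, hi, hiN, hj, hjM, rfl⟩
  exact ⟨(i, j), ⟨⟨hi, hiN⟩, hj, hjM⟩, rfl⟩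

theorem alpha_le_alphaMax {i j : ℕ} (hi : i ∈ Icc 1 D.N) (hj : j ∈ Icc 1 D.M) :
    D.alpha i j ≤ D.alphaMax :=
  le_csSup D.finite_alpha.bddAbove ⟨i, j, hi.1, hi.2, hj.1, hj.2, rfl⟩

theorem FHyp.alphaMax_mem_Ioo (hF : D.FHyp) (hN : 1 ≤ D.N) (hM : 1 ≤ D.M) :
    D.alphaMax ∈ Ioo 0 1 := by
  have nonempty :
      {a : ℝ | ∃ i j, 1 ≤ i ∧ i ≤ D.N ∧ 1 ≤ j ∧ j ≤ D.M ∧ a = D.alpha i j}.Nonempty :=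
    ⟨D.alpha 1 1, 1, 1, le_rfl, hN, le_rfl, hM, rfl⟩
  obtain ⟨i, j, hi, hiN, hj, hjM, attained⟩ := nonempty.csSup_mem D.finite_alpha
  rw [alphaMax, attained]
  exact hF.halpha i j hi hiN hj hjM

/-- The pairs `(i, j)` indexing the rectangles `D_{ij}`. -/
abbrev Cell (D : GenData) : Type := Icc 1 D.N × Icc 1 D.M

/-- The rectangle `D'_{ij}` over the cell `(i, j)`. -/
def source (D : GenData) (k : D.Cell) : Set (ℝ × ℝ) := D.Dij' k.1 k.2

/-- The map `(x, y) ↦ (u_i x, v_j y)` from `D'_{ij}` onto `D_{ij}`. -/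
def cellMap (D : GenData) (k : D.Cell) : ℝ × ℝ → ℝ × ℝ := Prod.map (D.u k.1) (D.v k.2)

/-- The fibre map `z ↦ F_{ij}(x, y, z)` over a point `(x, y)`. -/
def fibreMap (D : GenData) (k : D.Cell) (q : ℝ × ℝ) : ℝ → ℝ := D.F k.1 k.2 q.1 q.2

/-- The operator `Tφ(x, y) = F_{ij}(u_i⁻¹ x, v_j⁻¹ y, φ(u_i⁻¹ x, v_j⁻¹ y))` on `D_{ij}`. -/
def rbOperator (D : GenData) : (ℝ × ℝ → ℝ) → ℝ × ℝ → ℝ :=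
  readBajraktarevic D.source D.cellMap D.fibreMap

namespace RecurrentGrid

theorem source_subset (h : D.RecurrentGrid) (k : D.Cell) : D.source k ⊆ D.I ×ˢ D.J :=
  prod_mono (h.horizontal.source_subset k.1.2.2) (h.vertical.source_subset k.2.2.2)

theorem subset_iUnion_cellMap_image (h : D.RecurrentGrid) :
    D.I ×ˢ D.J ⊆ ⋃ k, D.cellMap k '' D.source k := by
  rintro ⟨a, b⟩ ⟨ha, hb⟩
  obtain ⟨i, s, hs, rfl⟩ := mem_iUnion.1 (h.horizontal.subset_iUnion_image ha)
  obtain ⟨j, t, ht, rfl⟩ := mem_iUnion.1 (h.vertical.subset_iUnion_image hb)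
  exact mem_iUnion.2 ⟨(i, j), (s, t), ⟨hs, ht⟩, rfl⟩

theorem piecesAgree (h : D.RecurrentGrid) (hm : D.Matchable) :
    PiecesAgree D.source D.cellMap D.fibreMap := by
  rintro ⟨⟨i, hi⟩, ⟨j, hj⟩⟩ ⟨⟨k, hk⟩, ⟨l, hl⟩⟩ ⟨s, t⟩ ⟨hs, ht⟩ ⟨s', t'⟩ ⟨hs', ht'⟩ hmap
  obtain ⟨hss, htt⟩ := Prod.mk.inj hmap
  refine ⟨Prod.ext ?_ ?_, ?_⟩
  · exact h.horizontal.apply_eq_of_map_eq (f := fun _ a ↦ a) (fun _ _ _ ↦ rfl) hi hk hs hs' hss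
  · exact h.vertical.apply_eq_of_map_eq (f := fun _ a ↦ a) (fun _ _ _ ↦ rfl) hj hl ht ht' htt
  calc D.F i j s t
    _ = D.F k j s' t := h.horizontal.apply_eq_of_map_eq (f := fun m a ↦ D.F m j a t)
        (fun m hm1 hmN ↦ funext (hm.1 m j hm1 hmN hj.1 hj.2 t ht)) hi hk hs hs' hss
    _ = D.F k l s' t' := h.vertical.apply_eq_of_map_eq (f := fun m a ↦ D.F k m s' a)
        (fun m hm1 hmM ↦ funext (hm.2 k m hk.1 hk.2 hm1 hmM s' hs')) hj hl ht ht' htt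

theorem rbOperator_apply (h : D.RecurrentGrid) (hm : D.Matchable) (φ : ℝ × ℝ → ℝ) {i j : ℕ}
    (hi : i ∈ Icc 1 D.N) (hj : j ∈ Icc 1 D.M) {q : ℝ × ℝ} (hq : q ∈ D.Dij' i j) :
    D.rbOperator φ (D.u i q.1, D.v j q.2) = D.F i j q.1 q.2 (φ q) :=
  readBajraktarevic_apply (h.piecesAgree hm) φ (i := (⟨i, hi⟩, ⟨j, hj⟩)) hq

theorem continuousOn_rbOperator (h : D.RecurrentGrid) (hF : D.FHyp) (hm : D.Matchable)
    {φ : ℝ × ℝ → ℝ} (hφ : ContinuousOn φ (D.I ×ˢ D.J)) :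
    ContinuousOn (D.rbOperator φ) (D.I ×ˢ D.J) := by
  refine (continuousOn_readBajraktarevic (h.piecesAgree hm) (fun k ↦ ?compact)
    (fun k ↦ ?map) (fun k ↦ ?fibre) fun k ↦ hφ.mono (h.source_subset k)).mono
    h.subset_iUnion_cellMap_image
  case compact => exact isCompact_uIcc.prod isCompact_uIcc
  case map =>
    exact (h.horizontal.continuousOn k.1 k.1.2).prodMap (h.vertical.continuousOn k.2 k.2.2)
  case fibre => exact hF.hFcont k.1 k.2 k.1.2.1 k.1.2.2 k.2.2.1 k.2.2.2

theorem rbOperator_node (h : D.RecurrentGrid) (hF : D.FHyp) (hm : D.Matchable)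
    {φ : ℝ × ℝ → ℝ} (hφ : ∀ i ≤ D.N, ∀ j ≤ D.M, φ (D.x i, D.y j) = D.z i j) {k l : ℕ}
    (hk : k ≤ D.N) (hl : l ≤ D.M) : D.rbOperator φ (D.x k, D.y l) = D.z k l := by
  obtain ⟨i, hi, hki, hxk, hux⟩ := h.horizontal.exists_source_of_node hk
  obtain ⟨j, hj, hlj, hyl, hvy⟩ := h.vertical.exists_source_of_node hl
  calc D.rbOperator φ (D.x k, D.y l)
    _ = D.rbOperator φ (D.u i (D.x' k), D.v j (D.y' l)) := by rw [x', y', hux, hvy]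
    _ = D.F i j (D.x' k) (D.y' l) (φ (D.x' k, D.y' l)) :=
        h.rbOperator_apply hm φ hi hj (q := (D.x' k, D.y' l)) ⟨hxk, hyl⟩
    _ = D.F i j (D.x' k) (D.y' l) (D.z' k l) := by
        rw [x', y', hφ _ (h.horizontal.index_le k hk) _ (h.vertical.index_le l hl), z']
    _ = D.z k l := hF.hFval i j hi.1 hi.2 hj.1 hj.2 k hki l hlj

theorem interpSp_rbOperator (h : D.RecurrentGrid) (hF : D.FHyp) (hm : D.Matchable)
    {φ : ℝ × ℝ → ℝ} (hφ : D.InterpSp φ) : D.InterpSp (D.rbOperator φ) :=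
  ⟨h.continuousOn_rbOperator hF hm hφ.1,
    fun _ hk _ hl ↦ h.rbOperator_node hF hm hφ.2 hk hl⟩

theorem abs_rbOperator_sub_le (h : D.RecurrentGrid) (hF : D.FHyp) (hm : D.Matchable)
    {φ ψ : ℝ × ℝ → ℝ} {b : ℝ} (hb : ∀ p ∈ D.I ×ˢ D.J, |φ p - ψ p| ≤ b) {p : ℝ × ℝ}
    (hp : p ∈ D.I ×ˢ D.J) :
    |D.rbOperator φ p - D.rbOperator ψ p| ≤ D.alphaMax * b := by
  refine dist_readBajraktarevic_le (h.piecesAgree hm)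
    (hF.alphaMax_mem_Ioo h.horizontal.one_le h.vertical.one_le).1.le (fun k q hq z z' ↦ ?_)
    (fun k q hq ↦ hb q (h.source_subset k hq)) (h.subset_iUnion_cellMap_image hp)
  exact (hF.hFlip k.1 k.2 k.1.2.1 k.1.2.2 k.2.2.1 k.2.2.2 q hq z z').trans
    (mul_le_mul_of_nonneg_right (alpha_le_alphaMax k.1.2 k.2.2) (abs_nonneg _))

end RecurrentGrid

end GenData

theorem RB_operator_welldefined_contraction_general (D : GenData) (h : D.RecurrentGrid)
    (hF : D.FHyp) (hm : D.Matchable) :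
    D.alphaMax < 1 ∧
    ∃ T : (ℝ × ℝ → ℝ) → ℝ × ℝ → ℝ,
      (∀ φ, D.InterpSp φ → D.InterpSp (T φ)) ∧
      (∀ φ, ∀ i j, 1 ≤ i → i ≤ D.N → 1 ≤ j → j ≤ D.M →
        ∀ p ∈ D.Dij' i j, T φ (D.u i p.1, D.v j p.2) = D.F i j p.1 p.2 (φ p)) ∧
      ∀ φ ψ, ∀ b : ℝ, (∀ p ∈ D.I ×ˢ D.J, |φ p - ψ p| ≤ b) →
        ∀ p ∈ D.I ×ˢ D.J, |T φ p - T ψ p| ≤ D.alphaMax * b :=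
  ⟨(hF.alphaMax_mem_Ioo h.horizontal.one_le h.vertical.one_le).2, D.rbOperator,
    fun _ hφ ↦ h.interpSp_rbOperator hF hm hφ,
    fun φ _ _ hi hiN hj hjM _ hq ↦ h.rbOperator_apply hm φ ⟨hi, hiN⟩ ⟨hj, hjM⟩ hq,
    fun _ _ _ hb _ hp ↦ h.abs_rbOperator_sub_le hF hm hb hp⟩

open GenData in
/-- Under the matchable conditions the Read–Bajraktarević operator
`Tφ(x,y) = F_{ij}(u_i⁻¹ x, v_j⁻¹ y, φ(u_i⁻¹ x, v_j⁻¹ y))` on `D_{ij}` is a well-defined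
map from `C*(I×J)` to itself (equivalently: there is a map `T` of `C*(I×J)` into itself
with `Tφ(u_i x, v_j y) = F_{ij}(x, y, φ(x,y))` on every `D'_{ij}`, so in particular the
values on common boundaries of the `D_{ij}` agree), and `T` is a contraction with ratio
`α = max α_{ij} < 1` for the sup metric. -/
theorem RB_operator_welldefined_contraction (D : GenData) (h1 : D.GridHyp) (h2 : D.FHyp)
    (hm : D.Matchable) :
    D.alphaMax < 1 ∧
    ∃ T : (ℝ × ℝ → ℝ) → ℝ × ℝ → ℝ,
      (∀ φ, D.InterpSp φ → D.InterpSp (T φ)) ∧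
      (∀ φ, D.InterpSp φ → ∀ i j, 1 ≤ i → i ≤ D.N → 1 ≤ j → j ≤ D.M →
        ∀ p ∈ D.Dij' i j, T φ (D.u i p.1, D.v j p.2) = D.F i j p.1 p.2 (φ p)) ∧
      ∀ φ ψ, D.InterpSp φ → D.InterpSp ψ → ∀ b : ℝ,
        (∀ p ∈ D.I ×ˢ D.J, |φ p - ψ p| ≤ b) →
        ∀ p ∈ D.I ×ˢ D.J, |T φ p - T ψ p| ≤ D.alphaMax * b := by
  obtain ⟨hα, T, hmaps, happly, hcontr⟩ :=
    RB_operator_welldefined_contraction_general D h1.recurrentGrid h2 hm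
  exact ⟨hα, T, hmaps, fun φ _ ↦ happly φ, fun φ ψ _ _ ↦ hcontr φ ψ⟩
end
end

section
/- Let f be the bilinear RFIF from the bilinear RFIF setup, and assume the vertical scaling factors {s_{ij}} are steady and have uniform sums {γ_rt} under a compatible partition B={B_r}_{r=1}^m (with γ_rt=0 when Λ_r∩Λ'_t=∅). Then there exists a constant C>0 such that for all 1≤r≤m and all n≥1, |O(f,n+1,B_r) − Σ_{t=1}^m γ_rt·O(f,n,B_t)| ≤ C·Kⁿ. -/
/- Bilinear recurrent fractal interpolation surfaces on [0,1]² (Liang–Ruan,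
   "Construction and box dimension of recurrent fractal interpolation surfaces"). -/

noncomputable section
open Set Filter

namespace RFIS

/-- The grid point `x_i = i / N` (also used for `y_j = j / N`). -/
def xg (N i : ℕ) : ℝ := (i : ℝ) / (N : ℝ)

/-- The interval `I_i = [x_{i-1}, x_i]` (also `J_j`). -/
def Ii (N i : ℕ) : Set ℝ := Icc (xg N (i - 1)) (xg N i)

/-- The unit square `[0,1]²`. -/
def sq : Set (ℝ × ℝ) := Icc (0 : ℝ) 1 ×ˢ Icc (0 : ℝ) 1

/-- The cell `D_{ij} = I_i × J_j`. -/
def Dij (N i j : ℕ) : Set (ℝ × ℝ) := Ii N i ×ˢ Ii N j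

/-- The point `x'_i = x_{px i}` chosen from the grid. -/
def xp (N : ℕ) (px : ℕ → ℕ) (i : ℕ) : ℝ := xg N (px i)

/-- The interval `I'_i`, with endpoints `x'_{i-1}` and `x'_i`. -/
def Ii' (N : ℕ) (px : ℕ → ℕ) (i : ℕ) : Set ℝ := uIcc (xp N px (i - 1)) (xp N px i)

/-- The domain `D'_{ij} = I'_i × J'_j`. -/
def Dij' (N : ℕ) (px py : ℕ → ℕ) (i j : ℕ) : Set (ℝ × ℝ) := Ii' N px i ×ˢ Ii' N py j

/-- The affine map `u_i : I'_i → I_i` with `u_i(x'_{i-1}) = x_{i-1}` and `u_i(x'_i) = x_i`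
(also used for `v_j`). -/
def usub (N : ℕ) (px : ℕ → ℕ) (i : ℕ) (t : ℝ) : ℝ :=
  xg N (i - 1) + (t - xp N px (i - 1)) * ((xg N i - xg N (i - 1)) / (xp N px i - xp N px (i - 1)))

/-- `F` is bilinear on `E`: of the form `a + b x + c y + d x y` on `E`. -/
def IsBilinearOn (F : ℝ × ℝ → ℝ) (E : Set (ℝ × ℝ)) : Prop :=
  ∃ a b c d : ℝ, ∀ p ∈ E, F p = a + b * p.1 + c * p.2 + d * p.1 * p.2

/-- The bilinear RFIF setup on `[0,1]²`: data `z_{ij}` on the uniform `N × N` grid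
(`M = N`, `x_i = y_i = i/N`), vertical scaling factors `s_{ij}` with `|s_{ij}| < 1`,
the points `x'_i = x_{px i}`, `y'_j = y_{py j}` with `|I'_i| = K |I_i|`, `|J'_j| = K |J_j|`
and the domains `D'_{ij}` pairwise equal or with disjoint interiors; the functions `S`, `h`
bilinear on each cell with the prescribed grid values, the bilinear functions `g_{ij}` with
corner values `z'`, and the bilinear RFIF `f`: the continuous function interpolating the
data and satisfying `f(u_i x, v_j y) = S(u_i x, v_j y)(f(x,y) − g_{ij}(x,y)) + h(u_i x, v_j y)`
on each `D'_{ij}`. -/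
structure Setup where
  N : ℕ
  K : ℕ
  hN : 2 ≤ N
  hK : 2 ≤ K
  px : ℕ → ℕ
  py : ℕ → ℕ
  hpx : ∀ i ≤ N, px i ≤ N
  hpy : ∀ j ≤ N, py j ≤ N
  hKx : ∀ i, 1 ≤ i → i ≤ N → |xp N px i - xp N px (i - 1)| = (K : ℝ) * (xg N i - xg N (i - 1))
  hKy : ∀ j, 1 ≤ j → j ≤ N → |xp N py j - xp N py (j - 1)| = (K : ℝ) * (xg N j - xg N (j - 1))
  hdisj : ∀ i₁ j₁ i₂ j₂, 1 ≤ i₁ → i₁ ≤ N → 1 ≤ j₁ → j₁ ≤ N → 1 ≤ i₂ → i₂ ≤ N → 1 ≤ j₂ → j₂ ≤ N →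
    Dij' N px py i₁ j₁ = Dij' N px py i₂ j₂ ∨
      interior (Dij' N px py i₁ j₁) ∩ interior (Dij' N px py i₂ j₂) = ∅
  z : ℕ → ℕ → ℝ
  s : ℕ → ℕ → ℝ
  hs : ∀ i ≤ N, ∀ j ≤ N, |s i j| < 1
  S : ℝ × ℝ → ℝ
  hScont : ContinuousOn S sq
  hSbil : ∀ i j, 1 ≤ i → i ≤ N → 1 ≤ j → j ≤ N → IsBilinearOn S (Dij N i j)
  hSval : ∀ i ≤ N, ∀ j ≤ N, S (xg N i, xg N j) = s i j
  h : ℝ × ℝ → ℝ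
  hhcont : ContinuousOn h sq
  hhbil : ∀ i j, 1 ≤ i → i ≤ N → 1 ≤ j → j ≤ N → IsBilinearOn h (Dij N i j)
  hhval : ∀ i ≤ N, ∀ j ≤ N, h (xg N i, xg N j) = z i j
  g : ℕ → ℕ → ℝ × ℝ → ℝ
  hgbil : ∀ i j, 1 ≤ i → i ≤ N → 1 ≤ j → j ≤ N → IsBilinearOn (g i j) (Dij' N px py i j)
  hgval : ∀ i j, 1 ≤ i → i ≤ N → 1 ≤ j → j ≤ N →
    ∀ k ∈ ({i - 1, i} : Set ℕ), ∀ l ∈ ({j - 1, j} : Set ℕ),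
      g i j (xp N px k, xp N py l) = z (px k) (py l)
  f : ℝ × ℝ → ℝ
  hfcont : ContinuousOn f sq
  hfval : ∀ i ≤ N, ∀ j ≤ N, f (xg N i, xg N j) = z i j
  hfeq : ∀ i j, 1 ≤ i → i ≤ N → 1 ≤ j → j ≤ N → ∀ p ∈ Dij' N px py i j,
    f (usub N px i p.1, usub N py j p.2)
      = S (usub N px i p.1, usub N py j p.2) * (f p - g i j p)
        + h (usub N px i p.1, usub N py j p.2)

/-- The oscillation `O(f, E) = sup {f(x') − f(x'') : x', x'' ∈ E}`. -/
def Osc (f : ℝ × ℝ → ℝ) (E : Set (ℝ × ℝ)) : ℝ :=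
  sSup {d : ℝ | ∃ p ∈ E, ∃ q ∈ E, d = f p - f q}

/-- The dyadic-type square `Dⁿ_{kl} = [(k-1)/(KⁿN), k/(KⁿN)] × [(l-1)/(KⁿN), l/(KⁿN)]`. -/
def Dn (N K n k l : ℕ) : Set (ℝ × ℝ) :=
  Icc (((k : ℝ) - 1) / ((K : ℝ) ^ n * (N : ℝ))) ((k : ℝ) / ((K : ℝ) ^ n * (N : ℝ))) ×ˢ
    Icc (((l : ℝ) - 1) / ((K : ℝ) ^ n * (N : ℝ))) ((l : ℝ) / ((K : ℝ) ^ n * (N : ℝ)))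

open Classical in
/-- `O(f, n, U) = Σ { O(f, Dⁿ_{kl}) : Dⁿ_{kl} ⊆ U }`. -/
def OscSum (f : ℝ × ℝ → ℝ) (N K n : ℕ) (U : Set (ℝ × ℝ)) : ℝ :=
  ∑ k ∈ Finset.Icc 1 (K ^ n * N), ∑ l ∈ Finset.Icc 1 (K ^ n * N),
    if Dn N K n k l ⊆ U then Osc f (Dn N K n k l) else 0

/-- The `ε`-coordinate cube `∏_{i=1}^3 [k_i ε, (k_i+1) ε]` in `ℝ³`. -/
def cube (ε : ℝ) (k : ℤ × ℤ × ℤ) : Set (ℝ × ℝ × ℝ) :=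
  Icc ((k.1 : ℝ) * ε) (((k.1 : ℝ) + 1) * ε) ×ˢ
    Icc ((k.2.1 : ℝ) * ε) (((k.2.1 : ℝ) + 1) * ε) ×ˢ
      Icc ((k.2.2 : ℝ) * ε) (((k.2.2 : ℝ) + 1) * ε)

/-- `N_E(ε)`: the number of `ε`-coordinate cubes intersecting `E`. -/
def Ncubes (E : Set (ℝ × ℝ × ℝ)) (ε : ℝ) : ℕ :=
  {k : ℤ × ℤ × ℤ | (cube ε k ∩ E).Nonempty}.ncard

/-- `log N_E(ε) / log (1/ε)`. -/
def boxRatio (E : Set (ℝ × ℝ × ℝ)) (ε : ℝ) : ℝ :=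
  Real.log (Ncubes E ε) / Real.log (1 / ε)

/-- The upper box dimension `lim sup_{ε→0+} log N_E(ε) / log (1/ε)`. -/
def upperBoxDim (E : Set (ℝ × ℝ × ℝ)) : ℝ :=
  limsup (boxRatio E) (nhdsWithin 0 (Ioi 0))

/-- The lower box dimension `lim inf_{ε→0+} log N_E(ε) / log (1/ε)`. -/
def lowerBoxDim (E : Set (ℝ × ℝ × ℝ)) : ℝ :=
  liminf (boxRatio E) (nhdsWithin 0 (Ioi 0))

/-- The box dimension of `E` exists and equals `d`. -/
def HasBoxDim (E : Set (ℝ × ℝ × ℝ)) (d : ℝ) : Prop :=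
  Tendsto (boxRatio E) (nhdsWithin 0 (Ioi 0)) (nhds d)

/-- The graph `Γ f|_E = {(x, y, f(x,y)) : (x,y) ∈ E}`. -/
def graphOn (f : ℝ × ℝ → ℝ) (E : Set (ℝ × ℝ)) : Set (ℝ × ℝ × ℝ) :=
  (fun p : ℝ × ℝ => (p.1, p.2, f p)) '' E

/-- `B` is a partition of `[0,1]²`: nonempty sets covering `[0,1]²` with pairwise
disjoint interiors. -/
def IsPartition (m : ℕ) (B : Fin m → Set (ℝ × ℝ)) : Prop :=
  (∀ r, (B r).Nonempty) ∧ (⋃ r, B r) = sq ∧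
    ∀ r t, r ≠ t → interior (B r) ∩ interior (B t) = ∅

/-- The partition `B` is compatible with `{D_{ij}, D'_{ij}}`: every `D_{ij}` lies in some
`B_r` and every `D'_{ij}` in some `B_t`; and whenever some `(i,j)` has `D_{ij} ⊆ B_r` and
`D'_{ij} ⊆ B_t`, then `B_t = ⋃ {D'_{kl} : D_{kl} ⊆ B_r, D'_{kl} ⊆ B_t}`. -/
def IsCompatible (st : Setup) {m : ℕ} (B : Fin m → Set (ℝ × ℝ)) : Prop :=
  (∀ i j, 1 ≤ i → i ≤ st.N → 1 ≤ j → j ≤ st.N →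
    (∃ r, Dij st.N i j ⊆ B r) ∧ (∃ t, Dij' st.N st.px st.py i j ⊆ B t)) ∧
  (∀ r t : Fin m,
    (∃ i j, 1 ≤ i ∧ i ≤ st.N ∧ 1 ≤ j ∧ j ≤ st.N ∧
      Dij st.N i j ⊆ B r ∧ Dij' st.N st.px st.py i j ⊆ B t) →
    B t = ⋃ (k : ℕ) (l : ℕ)
      (_ : 1 ≤ k ∧ k ≤ st.N ∧ 1 ≤ l ∧ l ≤ st.N ∧
        Dij st.N k l ⊆ B r ∧ Dij' st.N st.px st.py k l ⊆ B t),
      Dij' st.N st.px st.py k l)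

/-- The index set `Σ_N × Σ_N = {1,…,N}²`. -/
def idxS (N : ℕ) : Finset (ℕ × ℕ) := Finset.Icc 1 N ×ˢ Finset.Icc 1 N

open Classical in
/-- `Λ_r = {(i,j) : D_{ij} ⊆ B_r}`. -/
def Lam (st : Setup) {m : ℕ} (B : Fin m → Set (ℝ × ℝ)) (r : Fin m) : Finset (ℕ × ℕ) :=
  (idxS st.N).filter fun ij => Dij st.N ij.1 ij.2 ⊆ B r

open Classical in
/-- `Λ'_t = {(i,j) : D'_{ij} ⊆ B_t}`. -/
def Lam' (st : Setup) {m : ℕ} (B : Fin m → Set (ℝ × ℝ)) (t : Fin m) : Finset (ℕ × ℕ) :=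
  (idxS st.N).filter fun ij => Dij' st.N st.px st.py ij.1 ij.2 ⊆ B t

/-- The rectangle `[x_α, x_{α+K}] × [y_β, y_{β+K}]`. -/
def rect (N K α β : ℕ) : Set (ℝ × ℝ) :=
  Icc (xg N α) (xg N (α + K)) ×ˢ Icc (xg N β) (xg N (β + K))

open Classical in
/-- `Λ_r(α,β) = {(i,j) ∈ Λ_r : D'_{ij} = [x_α, x_{α+K}] × [y_β, y_{β+K}]}`. -/
def LamAB (st : Setup) {m : ℕ} (B : Fin m → Set (ℝ × ℝ)) (r : Fin m) (α β : ℕ) :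
    Finset (ℕ × ℕ) :=
  (Lam st B r).filter fun ij => Dij' st.N st.px st.py ij.1 ij.2 = rect st.N st.K α β

/-- The vertical scaling factors are steady: for each cell, the four corner factors are
all nonnegative or all nonpositive. -/
def Steady (st : Setup) : Prop :=
  ∀ i j, 1 ≤ i → i ≤ st.N → 1 ≤ j → j ≤ st.N →
    (0 ≤ st.s (i - 1) (j - 1) ∧ 0 ≤ st.s (i - 1) j ∧ 0 ≤ st.s i (j - 1) ∧ 0 ≤ st.s i j) ∨
    (st.s (i - 1) (j - 1) ≤ 0 ∧ st.s (i - 1) j ≤ 0 ∧ st.s i (j - 1) ≤ 0 ∧ st.s i j ≤ 0)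

/-- The sum `Σ_{(i,j) ∈ Λ_r(α,β)} |S(u_i(x_a), v_j(y_b))|`. -/
def cSum (st : Setup) {m : ℕ} (B : Fin m → Set (ℝ × ℝ)) (r : Fin m) (α β a b : ℕ) : ℝ :=
  ∑ ij ∈ LamAB st B r α β,
    |st.S (usub st.N st.px ij.1 (xg st.N a), usub st.N st.py ij.2 (xg st.N b))|

/-- The vertical scaling factors have uniform sums `γ_{rt}` under the partition `B`:
whenever `Λ_r ∩ Λ'_t ≠ ∅` and `[x_α, x_{α+K}] × [y_β, y_{β+K}] ∈ {D'_{ij} : (i,j) ∈ Λ_r ∩ Λ'_t}`,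
the four corner sums `Σ_{(i,j) ∈ Λ_r(α,β)} |S(u_i(x_a), v_j(y_b))|`,
`(a,b) ∈ {α, α+K} × {β, β+K}`, all equal `γ_{rt}`. -/
def HasUniformSums (st : Setup) {m : ℕ} (B : Fin m → Set (ℝ × ℝ))
    (γ : Fin m → Fin m → ℝ) : Prop :=
  ∀ r t : Fin m, (Lam st B r ∩ Lam' st B t).Nonempty →
    ∀ α β : ℕ, α + st.K ≤ st.N → β + st.K ≤ st.N →
      (∃ ij ∈ Lam st B r ∩ Lam' st B t,
        Dij' st.N st.px st.py ij.1 ij.2 = rect st.N st.K α β) →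
      cSum st B r α β α β = γ r t ∧ cSum st B r α β (α + st.K) β = γ r t ∧
      cSum st B r α β α (β + st.K) = γ r t ∧ cSum st B r α β (α + st.K) (β + st.K) = γ r t

/-- `γ_{rt} = 0` whenever `Λ_r ∩ Λ'_t = ∅`. -/
def GammaZero (st : Setup) {m : ℕ} (B : Fin m → Set (ℝ × ℝ))
    (γ : Fin m → Fin m → ℝ) : Prop :=
  ∀ r t : Fin m, Lam st B r ∩ Lam' st B t = ∅ → γ r t = 0

/-- There is an `n`-path (for some `n ≥ 1`) from `t` to `r` in the matrix `γ`:
a sequence `i_0 = t, …, i_n = r` with `γ_{i_k, i_{k-1}} > 0` for `k = 1, …, n`. -/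
def IsPathFrom {m : ℕ} (γ : Fin m → Fin m → ℝ) (t r : Fin m) : Prop :=
  ∃ n : ℕ, 1 ≤ n ∧ ∃ c : ℕ → Fin m, c 0 = t ∧ c n = r ∧
    ∀ k, 1 ≤ k → k ≤ n → 0 < γ (c k) (c (k - 1))

/-- `r ∼ t`: there are paths both from `r` to `t` and from `t` to `r`. -/
def Conn {m : ℕ} (γ : Fin m → Fin m → ℝ) (r t : Fin m) : Prop :=
  IsPathFrom γ r t ∧ IsPathFrom γ t r

/-- A connected subset: `r ∼ t` for all `r, t ∈ V`. -/
def IsConnSet {m : ℕ} (γ : Fin m → Fin m → ℝ) (V : Finset (Fin m)) : Prop :=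
  ∀ r ∈ V, ∀ t ∈ V, Conn γ r t

/-- A connected component: a maximal (nonempty) connected subset. -/
def IsConnComp {m : ℕ} (γ : Fin m → Fin m → ℝ) (V : Finset (Fin m)) : Prop :=
  V.Nonempty ∧ IsConnSet γ V ∧ ∀ W : Finset (Fin m), IsConnSet γ W → V ⊆ W → W = V

/-- The spectral radius of a real square matrix: the largest modulus of a (complex)
eigenvalue. -/
def specRad {n : Type*} [Fintype n] [DecidableEq n] (A : Matrix n n ℝ) : ℝ :=
  sSup {x : ℝ | ∃ μ ∈ spectrum ℂ (A.map (algebraMap ℝ ℂ)), x = ‖μ‖}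

/-- The submatrix `G|_V` of `G = (γ_{rt})` indexed by a subset `V`. -/
def subMat {m : ℕ} (γ : Fin m → Fin m → ℝ) (V : Finset (Fin m)) :
    Matrix {x // x ∈ V} {x // x ∈ V} ℝ :=
  fun a b => γ a.1 b.1

/-- `(k,l)` is an ancestor of `(i,j)`: there is a chain `(i,j) = (i_0,j_0), …, (i_n,j_n) = (k,l)`
in `Σ_N × Σ_N` with `D_{i_τ j_τ} ⊆ D'_{i_{τ-1} j_{τ-1}}` for all `τ`. -/
def Ancestor (st : Setup) (i j k l : ℕ) : Prop :=
  ∃ n : ℕ, 1 ≤ n ∧ ∃ c : ℕ → ℕ × ℕ,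
    c 0 = (i, j) ∧ c n = (k, l) ∧
    (∀ τ ≤ n, 1 ≤ (c τ).1 ∧ (c τ).1 ≤ st.N ∧ 1 ≤ (c τ).2 ∧ (c τ).2 ≤ st.N) ∧
    ∀ τ, 1 ≤ τ → τ ≤ n →
      Dij st.N (c τ).1 (c τ).2 ⊆ Dij' st.N st.px st.py (c (τ - 1)).1 (c (τ - 1)).2

/-- `A(i,j) = {(i,j)} ∪ {ancestors of (i,j)}`. -/
def AncSet (st : Setup) (i j : ℕ) : Set (ℕ × ℕ) :=
  {(i, j)} ∪ {kl | Ancestor st i j kl.1 kl.2}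

/-- The pair `(i,j)` is degenerate: every `(k,l) ∈ A(i,j)` has all four vertical scaling
corner factors zero, or `z_{pq} = g_{kl}(x_p, y_q)` for all grid points `(x_p, y_q) ∈ D'_{kl}`. -/
def DegenPair (st : Setup) (i j : ℕ) : Prop :=
  ∀ kl ∈ AncSet st i j,
    (st.s (kl.1 - 1) (kl.2 - 1) = 0 ∧ st.s (kl.1 - 1) kl.2 = 0 ∧
      st.s kl.1 (kl.2 - 1) = 0 ∧ st.s kl.1 kl.2 = 0) ∨
    (∀ p ≤ st.N, ∀ q ≤ st.N, (xg st.N p, xg st.N q) ∈ Dij' st.N st.px st.py kl.1 kl.2 →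
      st.z p q = st.g kl.1 kl.2 (xg st.N p, xg st.N q))

/-- The index `r` is degenerate: every `(i,j) ∈ Λ_r` is degenerate. -/
def DegenIdx (st : Setup) {m : ℕ} (B : Fin m → Set (ℝ × ℝ)) (r : Fin m) : Prop :=
  ∀ ij ∈ Lam st B r, DegenPair st ij.1 ij.2

/-- A set `V` of indices is degenerate: every `r ∈ V` is degenerate. -/
def DegenComp (st : Setup) {m : ℕ} (B : Fin m → Set (ℝ × ℝ)) (V : Finset (Fin m)) : Prop :=
  ∀ r ∈ V, DegenIdx st B r

end RFIS

/-!
On a cell `D ⊆ D'_{ij}` the functional equation reads `f ∘ T = (S ∘ T) (f - g) + h ∘ T`, where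
`T (x, y) = (u_i x, v_j y)` and `S ∘ T`, `g`, `h ∘ T` are Lipschitz. Freezing `S ∘ T` at a point
`c` of `D` shows that `O(f, T(D))` differs from `|S(T c)| O(f, D)` by at most a constant times the
side of `D`, which is `O(K⁻ⁿ)` for a cell of level `n`. As `T` carries the `O(K²ⁿ)` cells of
level `n` in `D'_{ij}` bijectively onto those of level `n + 1` in `D_{ij}`, summation costs an error
`O(Kⁿ)`. It remains to add up the weights `|S(T c)|` at a cell of `B_t` over all `(i, j) ∈ Λ_r`
whose `D'_{ij}` contains it. These `D'_{ij}` are one and the same rectangle; by steadiness each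
`|S ∘ T|` is bilinear there, so their sum, having the value `γ_{rt}` at the four corners, is
`γ_{rt}` throughout.
-/

namespace RFIS

/-! ### Bilinear functions -/

section Bilinear

variable {F G : ℝ × ℝ → ℝ} {E E' : Set (ℝ × ℝ)} {M x₀ x₁ y₀ y₁ : ℝ}

lemma IsBilinearOn.congr (hF : IsBilinearOn F E) (h : ∀ p ∈ E, G p = F p) : IsBilinearOn G E := by
  obtain ⟨a, b, c, d, hF⟩ := hF
  exact ⟨a, b, c, d, fun p hp => (h p hp).trans (hF p hp)⟩

lemma IsBilinearOn.neg (hF : IsBilinearOn F E) : IsBilinearOn (fun p => -F p) E := by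
  obtain ⟨a, b, c, d, hF⟩ := hF
  exact ⟨-a, -b, -c, -d, fun p hp => by simp only [hF p hp]; ring⟩

lemma IsBilinearOn.add (hF : IsBilinearOn F E) (hG : IsBilinearOn G E) :
    IsBilinearOn (fun p => F p + G p) E := by
  obtain ⟨a, b, c, d, hF⟩ := hF
  obtain ⟨a', b', c', d', hG⟩ := hG
  exact ⟨a + a', b + b', c + c', d + d', fun p hp => by simp only [hF p hp, hG p hp]; ring⟩

lemma IsBilinearOn.sum {ι : Type*} {s : Finset ι} {F : ι → ℝ × ℝ → ℝ}
    (hF : ∀ i ∈ s, IsBilinearOn (F i) E) : IsBilinearOn (fun p => ∑ i ∈ s, F i p) E := by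
  simp only [← Finset.sum_apply]
  exact Finset.sum_induction F (IsBilinearOn · E) (fun _ _ => .add)
    ⟨0, 0, 0, 0, fun p _ => by simp⟩ hF

lemma IsBilinearOn.comp_affine (hF : IsBilinearOn F E) {u v : ℝ → ℝ}
    (hu : ∃ a b, ∀ t, u t = a * t + b) (hv : ∃ a b, ∀ t, v t = a * t + b)
    (huv : MapsTo (Prod.map u v) E' E) : IsBilinearOn (F ∘ Prod.map u v) E' := by
  obtain ⟨a, b, c, d, hF⟩ := hF
  obtain ⟨a₁, b₁, hu⟩ := hu
  obtain ⟨a₂, b₂, hv⟩ := hv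
  refine ⟨a + b * b₁ + c * b₂ + d * b₁ * b₂, b * a₁ + d * a₁ * b₂, c * a₂ + d * b₁ * a₂,
    d * a₁ * a₂, fun p hp => ?_⟩
  rw [Function.comp_apply, hF _ (huv hp), Prod.map_fst, Prod.map_snd, hu, hv]
  ring

lemma IsBilinearOn.exists_lipschitzOnWith (hF : IsBilinearOn F E) (hE : Bornology.IsBounded E) :
    ∃ L, LipschitzOnWith L F E := by
  obtain ⟨a, b, c, d, hF⟩ := hF
  obtain ⟨R, hER⟩ := hE.subset_closedBall 0
  have hpoly : ContDiff ℝ 1 fun p : ℝ × ℝ => a + b * p.1 + c * p.2 + d * p.1 * p.2 := by fun_prop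
  obtain ⟨L, hL⟩ := hpoly.contDiffOn.exists_lipschitzOnWith one_ne_zero
    (convex_closedBall 0 R) (isCompact_closedBall 0 R)
  exact ⟨L, fun p hp q hq => by rw [hF p hp, hF q hq]; exact hL (hER hp) (hER hq)⟩

lemma le_affine_of_le_endpoints {a b u v t : ℝ} (ht : t ∈ Icc u v) (hu : M ≤ a + b * u)
    (hv : M ≤ a + b * v) : M ≤ a + b * t := by
  rcases le_total 0 b with hb | hb
  · linarith [mul_le_mul_of_nonneg_left ht.1 hb]
  · linarith [mul_le_mul_of_nonpos_left ht.2 hb]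

lemma IsBilinearOn.le_of_le_corners (hF : IsBilinearOn F (Icc x₀ x₁ ×ˢ Icc y₀ y₁))
    (hcor : ∀ x ∈ ({x₀, x₁} : Set ℝ), ∀ y ∈ ({y₀, y₁} : Set ℝ), M ≤ F (x, y)) {p : ℝ × ℝ}
    (hp : p ∈ Icc x₀ x₁ ×ˢ Icc y₀ y₁) : M ≤ F p := by
  obtain ⟨a, b, c, d, hF⟩ := hF
  have hx := hp.1.1.trans hp.1.2
  have hy := hp.2.1.trans hp.2.2
  have hedge : ∀ y ∈ ({y₀, y₁} : Set ℝ), M ≤ (a + b * p.1) + (c + d * p.1) * y := by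
    intro y hyc
    have hcorner : ∀ x ∈ ({x₀, x₁} : Set ℝ), M ≤ (a + c * y) + (b + d * y) * x := by
      intro x hxc
      have hxy : (x, y) ∈ Icc x₀ x₁ ×ˢ Icc y₀ y₁ := by
        rcases hxc with rfl | rfl <;> rcases hyc with rfl | rfl <;> simp [hx, hy]
      linarith [hcor x hxc y hyc, hF _ hxy]
    linarith [le_affine_of_le_endpoints hp.1 (hcorner x₀ (by simp)) (hcorner x₁ (by simp))]
  linarith [le_affine_of_le_endpoints hp.2 (hedge y₀ (by simp)) (hedge y₁ (by simp)), hF p hp]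

lemma IsBilinearOn.eq_of_eq_corners (hF : IsBilinearOn F (Icc x₀ x₁ ×ˢ Icc y₀ y₁))
    (hcor : ∀ x ∈ ({x₀, x₁} : Set ℝ), ∀ y ∈ ({y₀, y₁} : Set ℝ), F (x, y) = M) {p : ℝ × ℝ}
    (hp : p ∈ Icc x₀ x₁ ×ˢ Icc y₀ y₁) : F p = M :=
  le_antisymm
    (neg_le_neg_iff.1 <|
      hF.neg.le_of_le_corners (fun x hx y hy => (neg_inj.2 (hcor x hx y hy)).ge) hp)
    (hF.le_of_le_corners (fun x hx y hy => (hcor x hx y hy).ge) hp)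

lemma IsBilinearOn.abs_of_sameSign_corners (hF : IsBilinearOn F (Icc x₀ x₁ ×ˢ Icc y₀ y₁))
    (hcor : (∀ x ∈ ({x₀, x₁} : Set ℝ), ∀ y ∈ ({y₀, y₁} : Set ℝ), 0 ≤ F (x, y)) ∨
      ∀ x ∈ ({x₀, x₁} : Set ℝ), ∀ y ∈ ({y₀, y₁} : Set ℝ), F (x, y) ≤ 0) :
    IsBilinearOn (fun p => |F p|) (Icc x₀ x₁ ×ˢ Icc y₀ y₁) := by
  rcases hcor with hcor | hcor
  · exact hF.congr fun p hp => abs_of_nonneg (hF.le_of_le_corners hcor hp)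
  · refine hF.neg.congr fun p hp => abs_of_nonpos (neg_nonneg.1 ?_)
    exact hF.neg.le_of_le_corners (fun x hx y hy => neg_nonneg.2 (hcor x hx y hy)) hp

end Bilinear

/-! ### Oscillation -/

section Oscillation

variable {f F G s g h : ℝ × ℝ → ℝ} {E : Set (ℝ × ℝ)}

lemma osc_image (f : ℝ × ℝ → ℝ) (T : ℝ × ℝ → ℝ × ℝ) (E : Set (ℝ × ℝ)) :
    Osc f (T '' E) = Osc (f ∘ T) E := by
  simp only [Osc, exists_mem_image, Function.comp_apply]

lemma osc_neg (f : ℝ × ℝ → ℝ) (E : Set (ℝ × ℝ)) : Osc (fun p => -f p) E = Osc f E := by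
  unfold Osc
  congr 1
  ext d
  constructor <;> rintro ⟨p, hp, q, hq, rfl⟩ <;> exact ⟨q, hq, p, hp, by ring⟩

lemma osc_const_mul_of_nonneg {σ : ℝ} (hσ : 0 ≤ σ) (f : ℝ × ℝ → ℝ) (E : Set (ℝ × ℝ)) :
    Osc (fun p => σ * f p) E = σ * Osc f E := by
  unfold Osc
  rw [← smul_eq_mul, ← Real.sSup_smul_of_nonneg hσ]
  congr 1
  ext d
  constructor
  · rintro ⟨p, hp, q, hq, rfl⟩
    exact ⟨_, ⟨p, hp, q, hq, rfl⟩, mul_sub σ (f p) (f q)⟩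
  · rintro ⟨_, ⟨p, hp, q, hq, rfl⟩, rfl⟩
    exact ⟨p, hp, q, hq, mul_sub σ (f p) (f q)⟩

lemma osc_const_mul (σ : ℝ) (f : ℝ × ℝ → ℝ) (E : Set (ℝ × ℝ)) :
    Osc (fun p => σ * f p) E = |σ| * Osc f E := by
  rcases le_total 0 σ with hσ | hσ
  · rw [abs_of_nonneg hσ, osc_const_mul_of_nonneg hσ]
  · rw [abs_of_nonpos hσ, ← osc_const_mul_of_nonneg (neg_nonneg.2 hσ), ← osc_neg]
    simp only [neg_mul]

lemma sub_le_osc (hf : Bornology.IsBounded (f '' E)) {p q : ℝ × ℝ} (hp : p ∈ E) (hq : q ∈ E) :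
    f p - f q ≤ Osc f E := by
  refine le_csSup ⟨Metric.diam (f '' E), ?_⟩ ⟨p, hp, q, hq, rfl⟩
  rintro _ ⟨p, hp, q, hq, rfl⟩
  exact (le_abs_self _).trans
    (Metric.dist_le_diam_of_mem hf (mem_image_of_mem f hp) (mem_image_of_mem f hq))

lemma osc_le_osc_add {ε : ℝ} (hE : E.Nonempty) (hG : Bornology.IsBounded (G '' E))
    (hFG : ∀ p ∈ E, ∀ q ∈ E, |(F p - G p) - (F q - G q)| ≤ ε) : Osc F E ≤ Osc G E + ε := by
  obtain ⟨x, hx⟩ := hE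
  refine csSup_le ⟨_, x, hx, x, hx, rfl⟩ ?_
  rintro _ ⟨p, hp, q, hq, rfl⟩
  linarith [le_of_abs_le (hFG p hp q hq), sub_le_osc hG hp hq]

lemma abs_osc_sub_osc_le {ε : ℝ} (hE : E.Nonempty) (hG : Bornology.IsBounded (G '' E))
    (hFG : ∀ p ∈ E, ∀ q ∈ E, |(F p - G p) - (F q - G q)| ≤ ε) : |Osc F E - Osc G E| ≤ ε := by
  have hF : Bornology.IsBounded (F '' E) := by
    refine Metric.isBounded_iff.2 ⟨Osc G E + ε, ?_⟩
    rintro _ ⟨p, hp, rfl⟩ _ ⟨q, hq, rfl⟩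
    rw [Real.dist_eq, abs_sub_le_iff]
    constructor
    · linarith [le_of_abs_le (hFG p hp q hq), sub_le_osc hG hp hq]
    · linarith [le_of_abs_le (hFG q hq p hp), sub_le_osc hG hq hp]
  rw [abs_sub_le_iff, sub_le_iff_le_add', sub_le_iff_le_add']
  refine ⟨osc_le_osc_add hE hG hFG, osc_le_osc_add hE hF fun p hp q hq => ?_⟩
  rw [← abs_neg]
  convert hFG p hp q hq using 2
  ring

lemma abs_osc_sub_mul_osc_le {Ls Lg Lh : NNReal} {W δ : ℝ} {c : ℝ × ℝ} (hc : c ∈ E)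
    (hδ : ∀ p ∈ E, ∀ q ∈ E, dist p q ≤ δ) (hs : LipschitzOnWith Ls s E)
    (hg : LipschitzOnWith Lg g E) (hh : LipschitzOnWith Lh h E)
    (hf : Bornology.IsBounded (f '' E)) (hW : ∀ p ∈ E, |f p - g p| ≤ W)
    (hF : ∀ p ∈ E, F p = s p * (f p - g p) + h p) :
    |Osc F E - |s c| * Osc f E| ≤ (2 * Ls * W + |s c| * Lg + Lh) * δ := by
  have hsf : Bornology.IsBounded ((fun p => s c * f p) '' E) := by
    simpa only [← image_smul, image_image, smul_eq_mul] using hf.smul₀ (s c)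
  have hlip : ∀ {L : NNReal} {φ : ℝ × ℝ → ℝ}, LipschitzOnWith L φ E →
      ∀ p ∈ E, ∀ q ∈ E, |φ p - φ q| ≤ L * δ := fun hφ p hp q hq =>
    (hφ.dist_le_mul p hp q hq).trans (by gcongr; exact hδ p hp q hq)
  have hprod : ∀ p ∈ E, |(s p - s c) * (f p - g p)| ≤ Ls * δ * W := fun p hp => by
    rw [abs_mul]
    exact mul_le_mul (hlip hs p hp c hc) (hW p hp) (abs_nonneg _)
      ((abs_nonneg _).trans (hlip hs p hp c hc))
  rw [← osc_const_mul]
  refine abs_osc_sub_osc_le ⟨c, hc⟩ hsf fun p hp q hq => ?_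
  have hdecomp : (F p - s c * f p) - (F q - s c * f q) = (s p - s c) * (f p - g p)
      - (s q - s c) * (f q - g q) - s c * (g p - g q) + (h p - h q) := by
    rw [hF p hp, hF q hq]
    ring
  calc |(F p - s c * f p) - (F q - s c * f q)|
      ≤ |(s p - s c) * (f p - g p)| + |(s q - s c) * (f q - g q)|
          + |s c * (g p - g q)| + |h p - h q| := by
        rw [hdecomp]
        refine (abs_add_le _ _).trans (add_le_add_left ?_ _)
        exact (norm_sub_le (E := ℝ) _ _).trans (add_le_add_left (norm_sub_le (E := ℝ) _ _) _)
    _ ≤ Ls * δ * W + Ls * δ * W + |s c| * (Lg * δ) + Lh * δ := by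
        rw [abs_mul (s c)]
        gcongr
        exacts [hprod p hp, hprod q hq, hlip hg p hp q hq, hlip hh p hp q hq]
    _ = (2 * Ls * W + |s c| * Lg + Lh) * δ := by ring

end Oscillation

/-! ### Cells of the uniform grids -/

section Grid

variable {N M c a b i k : ℕ}

lemma xg_mono (N : ℕ) : Monotone (xg N) := fun _ _ h => by
  unfold xg
  gcongr

lemma xg_strictMono (hN : 0 < N) : StrictMono (xg N) := fun _ _ h => by
  unfold xg
  gcongr

lemma xg_mul_mul_left (hc : 0 < c) (N i : ℕ) : xg (c * N) (c * i) = xg N i := by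
  rw [xg, xg, Nat.cast_mul, Nat.cast_mul, mul_div_mul_left _ _ (Nat.cast_ne_zero.2 hc.ne')]

lemma xg_mem_Ii (N i : ℕ) : xg N i ∈ Ii N i := right_mem_Icc.2 (xg_mono N (Nat.sub_le i 1))

lemma xg_sub_xg_pred (hi : 1 ≤ i) : xg N i - xg N (i - 1) = 1 / N := by
  rw [xg, xg, ← sub_div, Nat.cast_pred hi, sub_sub_cancel]

lemma interior_Ii_nonempty (hM : 0 < M) (hk : 1 ≤ k) : (interior (Ii M k)).Nonempty := by
  rw [Ii, interior_Icc, nonempty_Ioo]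
  exact xg_strictMono hM (Nat.sub_lt hk one_pos)

lemma Ii_subset_Icc_iff (hM : 0 < M) : Ii M k ⊆ Icc (xg M a) (xg M b) ↔ a ≤ k - 1 ∧ k ≤ b := by
  rw [Ii, Icc_subset_Icc_iff (xg_mono M (Nat.sub_le k 1)), (xg_strictMono hM).le_iff_le,
    (xg_strictMono hM).le_iff_le]

lemma Ii_subset_Icc_of_mem_interior {t : ℝ} (hM : 0 < M) (hk : 1 ≤ k) (ht : t ∈ interior (Ii M k))
    (htI : t ∈ Icc (xg M a) (xg M b)) : Ii M k ⊆ Icc (xg M a) (xg M b) := by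
  rw [Ii, interior_Icc] at ht
  have ha := (xg_strictMono hM).lt_iff_lt.1 (htI.1.trans_lt ht.2)
  have hb := (xg_strictMono hM).lt_iff_lt.1 (ht.1.trans_le htI.2)
  exact (Ii_subset_Icc_iff hM).2 ⟨by omega, by omega⟩

lemma Ii_mul_subset_Icc_iff (hc : 0 < c) (hN : 0 < N) :
    Ii (c * N) k ⊆ Icc (xg N a) (xg N b) ↔ c * a ≤ k - 1 ∧ k ≤ c * b := by
  rw [← xg_mul_mul_left hc N a, ← xg_mul_mul_left hc N b, Ii_subset_Icc_iff (Nat.mul_pos hc hN)]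

lemma exists_Ii_superset (hc : 0 < c) (hN : 0 < N) (hk : k ∈ Finset.Icc 1 (c * N)) :
    ∃ i ∈ Finset.Icc 1 N, Ii (c * N) k ⊆ Ii N i := by
  rw [Finset.mem_Icc] at hk
  have hlt : (k - 1) / c < N := Nat.div_lt_of_lt_mul (by omega)
  refine ⟨(k - 1) / c + 1, Finset.mem_Icc.2 ⟨Nat.le_add_left 1 _, hlt⟩,
    (Ii_mul_subset_Icc_iff hc hN).2 ?_⟩
  have hmod := Nat.div_add_mod (k - 1) c
  have hmod_lt := Nat.mod_lt (k - 1) hc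
  rw [add_tsub_cancel_right, mul_add]
  omega

lemma disjoint_interior_Ii {i' : ℕ} (h : i ≠ i') :
    Disjoint (interior (Ii N i)) (interior (Ii N i')) := by
  simp only [Ii, interior_Icc]
  exact (xg_mono N).pairwise_disjoint_on_Ioo_pred h

end Grid

/-! ### Oscillation sums as sums over finite sets of cells -/

section CellsIn

open Classical in
/-- The indices of the cells of the uniform `M × M` grid that lie in `U`. The cells `Dⁿ_{kl}`
are those of the grid with `M = Kⁿ N`, and `Λ_r` is `cellsIn N (B r)`. -/
def cellsIn (M : ℕ) (U : Set (ℝ × ℝ)) : Finset (ℕ × ℕ) :=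
  (idxS M).filter fun kl => Dij M kl.1 kl.2 ⊆ U

variable {N M c a b k : ℕ} {U V : Set (ℝ × ℝ)} {kl ij : ℕ × ℕ}

lemma mem_cellsIn : kl ∈ cellsIn M U ↔ kl ∈ idxS M ∧ Dij M kl.1 kl.2 ⊆ U := by
  simp only [cellsIn, Finset.mem_filter]

lemma mem_idxS : ij ∈ idxS N ↔ (1 ≤ ij.1 ∧ ij.1 ≤ N) ∧ 1 ≤ ij.2 ∧ ij.2 ≤ N := by
  simp only [idxS, Finset.mem_product, Finset.mem_Icc]

lemma card_cellsIn_le (M : ℕ) (U : Set (ℝ × ℝ)) : (cellsIn M U).card ≤ M ^ 2 := by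
  classical
  refine (Finset.card_filter_le _ _).trans_eq ?_
  rw [idxS, Finset.card_product, Nat.card_Icc, Nat.add_sub_cancel, pow_two]

lemma Dn_eq_Dij {K n l : ℕ} (hk : 1 ≤ k) (hl : 1 ≤ l) : Dn N K n k l = Dij (K ^ n * N) k l := by
  simp only [Dn, Dij, Ii, xg, Nat.cast_pred hk, Nat.cast_pred hl, Nat.cast_mul, Nat.cast_pow]

lemma oscSum_eq_sum_cellsIn (f : ℝ × ℝ → ℝ) (N K n : ℕ) (U : Set (ℝ × ℝ)) :
    OscSum f N K n U =
      ∑ kl ∈ cellsIn (K ^ n * N) U, Osc f (Dij (K ^ n * N) kl.1 kl.2) := by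
  rw [OscSum, ← Finset.sum_product', cellsIn, Finset.sum_filter]
  refine Finset.sum_congr rfl fun kl hkl => ?_
  obtain ⟨⟨hk, -⟩, hl, -⟩ := mem_idxS.1 hkl
  rw [Dn_eq_Dij hk hl]

lemma interior_Dij_nonempty (hkl : kl ∈ idxS M) : (interior (Dij M kl.1 kl.2)).Nonempty := by
  obtain ⟨⟨hk, hkM⟩, hl, -⟩ := mem_idxS.1 hkl
  have hM := hk.trans hkM
  rw [Dij, interior_prod_eq]
  exact (interior_Ii_nonempty hM hk).prod (interior_Ii_nonempty hM hl)

lemma dist_le_of_mem_Dij {p q : ℝ × ℝ} (hkl : kl ∈ idxS M) (hp : p ∈ Dij M kl.1 kl.2)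
    (hq : q ∈ Dij M kl.1 kl.2) : dist p q ≤ 1 / M := by
  obtain ⟨⟨hk, -⟩, hl, -⟩ := mem_idxS.1 hkl
  refine max_le ?_ ?_
  · exact (Real.dist_le_of_mem_Icc hp.1 hq.1).trans_eq (xg_sub_xg_pred hk)
  · exact (Real.dist_le_of_mem_Icc hp.2 hq.2).trans_eq (xg_sub_xg_pred hl)

lemma disjoint_cellsIn (hUV : interior U ∩ interior V = ∅) :
    Disjoint (cellsIn M U) (cellsIn M V) := by
  refine Finset.disjoint_left.2 fun kl hU hV => ?_
  obtain ⟨hkl, hklU⟩ := mem_cellsIn.1 hU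
  refine ((interior_Dij_nonempty hkl).mono ?_).ne_empty hUV
  exact subset_inter (interior_mono hklU) (interior_mono (mem_cellsIn.1 hV).2)

lemma interior_Dij_inter_interior_Dij {ij' : ℕ × ℕ} (h : ij ≠ ij') :
    interior (Dij N ij.1 ij.2) ∩ interior (Dij N ij'.1 ij'.2) = ∅ := by
  rw [← disjoint_iff_inter_eq_empty, Dij, Dij, interior_prod_eq, interior_prod_eq,
    Set.disjoint_prod]
  exact (not_and_or.1 (mt Prod.ext_iff.2 h)).imp disjoint_interior_Ii disjoint_interior_Ii

lemma exists_Dij_superset (hc : 0 < c) (hN : 0 < N) (hkl : kl ∈ idxS (c * N)) :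
    ∃ ij ∈ idxS N, Dij (c * N) kl.1 kl.2 ⊆ Dij N ij.1 ij.2 := by
  obtain ⟨hk, hl⟩ := Finset.mem_product.1 hkl
  obtain ⟨i, hi, hki⟩ := exists_Ii_superset hc hN hk
  obtain ⟨j, hj, hlj⟩ := exists_Ii_superset hc hN hl
  exact ⟨(i, j), Finset.mk_mem_product hi hj, prod_mono hki hlj⟩

lemma cellsIn_prod {a' b' : ℕ} (hc : 0 < c) (hN : 0 < N) (hb : b ≤ N) (hb' : b' ≤ N) :
    cellsIn (c * N) (Icc (xg N a) (xg N b) ×ˢ Icc (xg N a') (xg N b')) =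
      Finset.Ioc (c * a) (c * b) ×ˢ Finset.Ioc (c * a') (c * b') := by
  ext ⟨k, l⟩
  have hne : (Dij (c * N) k l).Nonempty := ⟨(_, _), xg_mem_Ii _ _, xg_mem_Ii _ _⟩
  have hcb := Nat.mul_le_mul_left c hb
  have hcb' := Nat.mul_le_mul_left c hb'
  rw [mem_cellsIn, mem_idxS, Dij, Set.prod_subset_prod_iff' hne,
    Ii_mul_subset_Icc_iff hc hN, Ii_mul_subset_Icc_iff hc hN, Finset.mem_product,
    Finset.mem_Ioc, Finset.mem_Ioc]
  omega

end CellsIn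

/-! ### The affine substitutions -/

section Substitution

variable {N K c i : ℕ} {px : ℕ → ℕ}

lemma exists_usub_eq_affine (N : ℕ) (px : ℕ → ℕ) (i : ℕ) :
    ∃ a b, ∀ t, usub N px i t = a * t + b :=
  ⟨(xg N i - xg N (i - 1)) / (xp N px i - xp N px (i - 1)), _, fun t => by
    rw [usub, sub_mul, mul_comm t, add_sub_left_comm]⟩

lemma usub_image_uIcc (N : ℕ) (px : ℕ → ℕ) (i : ℕ) (s t : ℝ) :
    usub N px i '' uIcc s t = uIcc (usub N px i s) (usub N px i t) := by
  obtain ⟨a, b, hab⟩ := exists_usub_eq_affine N px i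
  rw [funext hab, ← image_image (· + b), image_const_mul_uIcc, image_add_const_uIcc]

lemma usub_image_Ii' (h : xp N px i ≠ xp N px (i - 1)) : usub N px i '' Ii' N px i = Ii N i := by
  rw [Ii', usub_image_uIcc, usub, usub, sub_self, zero_mul, add_zero,
    mul_div_cancel₀ _ (sub_ne_zero.2 h), add_sub_cancel, uIcc_of_le (xg_mono N (Nat.sub_le i 1)),
    Ii]

lemma xp_mem_Icc (hN : 0 < N) (hpx : px i ≤ N) :
    xp N px i ∈ Icc (0 : ℝ) 1 :=
  ⟨by unfold xp xg; positivity, (div_le_one (Nat.cast_pos.2 hN)).2 (Nat.cast_le.2 hpx)⟩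

lemma xp_ne_xp_pred (hN : 0 < N) (hK : 0 < K) (hi : 1 ≤ i)
    (hKx : |xp N px i - xp N px (i - 1)| = K * (xg N i - xg N (i - 1))) :
    xp N px i ≠ xp N px (i - 1) := by
  rw [← sub_ne_zero, ← abs_pos, hKx, xg_sub_xg_pred hi]
  positivity

lemma px_eq_add_or_eq_add (hN : 0 < N) (hi : 1 ≤ i)
    (hKx : |xp N px i - xp N px (i - 1)| = K * (xg N i - xg N (i - 1))) :
    px i = px (i - 1) + K ∨ px (i - 1) = px i + K := by
  have hN' : (0 : ℝ) < N := Nat.cast_pos.2 hN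
  rw [xg_sub_xg_pred hi, xp, xp, xg, xg, ← sub_div, abs_div, abs_of_pos hN', mul_one_div,
    div_left_inj' hN'.ne', abs_eq (Nat.cast_nonneg K)] at hKx
  refine hKx.imp (fun h => ?_) fun h => ?_
  · rw [sub_eq_iff_eq_add'] at h
    exact_mod_cast h
  · rw [← neg_sub, neg_inj, sub_eq_iff_eq_add'] at h
    exact_mod_cast h

lemma usub_xg_of_add (hN : 0 < N) (hK : 0 < K) (hc : 0 < c) (hi : 1 ≤ i)
    (hpx : px i = px (i - 1) + K) (d : ℕ) :
    usub N px i (xg (c * N) (c * px (i - 1) + d)) = xg (K * c * N) (K * c * (i - 1) + d) := by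
  have hden : ((px (i - 1) : ℝ) + K) - px (i - 1) ≠ 0 := by simpa using hK.ne'
  rw [usub, xg_sub_xg_pred hi, xp, xp, hpx, xg, xg, xg, xg, xg]
  push_cast
  field_simp
  ring

lemma usub_xg_of_sub (hN : 0 < N) (hK : 0 < K) (hc : 0 < c) (hi : 1 ≤ i)
    (hpx : px (i - 1) = px i + K) (d : ℕ) (hd : d ≤ c * px (i - 1)) :
    usub N px i (xg (c * N) (c * px (i - 1) - d)) = xg (K * c * N) (K * c * (i - 1) + d) := by
  have hden : ((px i : ℝ) - (px i + K)) ≠ 0 := by simpa using hK.ne'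
  rw [usub, xg_sub_xg_pred hi, xp, xp, xg, xg, xg, xg, xg, Nat.cast_sub hd, hpx]
  push_cast
  field_simp
  ring

lemma bijOn_Ioc_translate (A L B : ℕ) :
    BijOn (fun k => B + (k - A)) (Ioc A (A + L)) (Ioc B (B + L)) := by
  simp only [BijOn, MapsTo, InjOn, SurjOn, subset_def, mem_image, mem_Ioc]
  exact ⟨fun k hk => by omega, fun k hk l hl h => by omega,
    fun m hm => ⟨A + (m - B), by omega⟩⟩

lemma bijOn_Ioc_reflect (A L B : ℕ) :
    BijOn (fun k => B + (A + L - k + 1)) (Ioc A (A + L)) (Ioc B (B + L)) := by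
  simp only [BijOn, MapsTo, InjOn, SurjOn, subset_def, mem_image, mem_Ioc]
  exact ⟨fun k hk => by omega, fun k hk l hl h => by omega,
    fun m hm => ⟨A + L + 1 - (m - B), by omega⟩⟩

lemma exists_bijOn_cells_of_add (hN : 0 < N) (hK : 0 < K) (hc : 0 < c) (hi : 1 ≤ i)
    (hpx : px i = px (i - 1) + K) :
    ∃ ψ : ℕ → ℕ,
      BijOn ψ (Ioc (c * px (i - 1)) (c * (px (i - 1) + K))) (Ioc (K * c * (i - 1)) (K * c * i)) ∧
      ∀ k ∈ Ioc (c * px (i - 1)) (c * (px (i - 1) + K)),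
        usub N px i '' Ii (c * N) k = Ii (K * c * N) (ψ k) := by
  have hlen : K * c * i = K * c * (i - 1) + c * K := by
    rw [mul_comm c K, ← mul_add_one, Nat.sub_add_cancel hi]
  rw [hlen, mul_add]
  refine ⟨_, bijOn_Ioc_translate (c * px (i - 1)) (c * K) (K * c * (i - 1)), fun k hk => ?_⟩
  obtain ⟨d, rfl⟩ : ∃ d, k = c * px (i - 1) + (d + 1) :=
    ⟨k - c * px (i - 1) - 1, by rw [mem_Ioc] at hk; omega⟩
  rw [Ii, Ii, ← uIcc_of_le (xg_mono _ (Nat.sub_le _ 1)), ← uIcc_of_le (xg_mono _ (Nat.sub_le _ 1)),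
    usub_image_uIcc, ← add_assoc, Nat.add_sub_cancel, add_assoc, usub_xg_of_add hN hK hc hi hpx,
    usub_xg_of_add hN hK hc hi hpx]
  rw [Nat.add_sub_cancel_left, ← add_assoc, Nat.add_sub_cancel]

lemma exists_bijOn_cells_of_sub (hN : 0 < N) (hK : 0 < K) (hc : 0 < c) (hi : 1 ≤ i)
    (hpx : px (i - 1) = px i + K) :
    ∃ ψ : ℕ → ℕ,
      BijOn ψ (Ioc (c * px i) (c * (px i + K))) (Ioc (K * c * (i - 1)) (K * c * i)) ∧
      ∀ k ∈ Ioc (c * px i) (c * (px i + K)),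
        usub N px i '' Ii (c * N) k = Ii (K * c * N) (ψ k) := by
  have hlen : K * c * i = K * c * (i - 1) + c * K := by
    rw [mul_comm c K, ← mul_add_one, Nat.sub_add_cancel hi]
  have hcp : c * px (i - 1) = c * px i + c * K := by rw [hpx, mul_add]
  rw [hlen, mul_add]
  refine ⟨_, bijOn_Ioc_reflect (c * px i) (c * K) (K * c * (i - 1)), fun k hk => ?_⟩
  obtain ⟨d, hd, rfl⟩ : ∃ d, d + 1 ≤ c * px (i - 1) ∧ k = c * px (i - 1) - d :=
    ⟨c * px (i - 1) - k, by rw [mem_Ioc] at hk; omega⟩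
  rw [Ii, Ii, ← uIcc_of_le (xg_mono _ (Nat.sub_le _ 1)), ← uIcc_of_ge (xg_mono _ (Nat.sub_le _ 1)),
    usub_image_uIcc, Nat.sub_sub, usub_xg_of_sub hN hK hc hi hpx _ hd,
    usub_xg_of_sub hN hK hc hi hpx _ (Nat.le_of_succ_le hd)]
  rw [← hcp, Nat.sub_sub_self (Nat.le_of_succ_le hd), ← add_assoc, Nat.add_sub_cancel]

lemma exists_bijOn_cells (hN : 0 < N) (hK : 0 < K) (hi : 1 ≤ i) (hpx : px i ≤ N)
    (hpx' : px (i - 1) ≤ N) (hKx : |xp N px i - xp N px (i - 1)| = K * (xg N i - xg N (i - 1))) :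
    ∃ α, α + K ≤ N ∧ Ii' N px i = Icc (xg N α) (xg N (α + K)) ∧ ∀ c, 0 < c → ∃ ψ : ℕ → ℕ,
      BijOn ψ (Ioc (c * α) (c * (α + K))) (Ioc (K * c * (i - 1)) (K * c * i)) ∧
      ∀ k ∈ Ioc (c * α) (c * (α + K)), usub N px i '' Ii (c * N) k = Ii (K * c * N) (ψ k) := by
  rcases px_eq_add_or_eq_add hN hi hKx with h | h
  · refine ⟨px (i - 1), h ▸ hpx, ?_, fun c hc => exists_bijOn_cells_of_add hN hK hc hi h⟩
    rw [Ii', xp, xp, h, uIcc_of_le (xg_mono N (Nat.le_add_right _ K))]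
  · refine ⟨px i, h ▸ hpx', ?_, fun c hc => exists_bijOn_cells_of_sub hN hK hc hi h⟩
    rw [Ii', xp, xp, h, uIcc_of_ge (xg_mono N (Nat.le_add_right _ K))]

end Substitution

/-! ### Oscillation on the cells of one `D_{ij}` -/

namespace Setup

variable {st : Setup} {ij : ℕ × ℕ}

/-- The affine map `(x, y) ↦ (u_i x, v_j y)`, which carries `D'_{ij}` onto `D_{ij}`. -/
def cellMap (st : Setup) (ij : ℕ × ℕ) : ℝ × ℝ → ℝ × ℝ :=
  Prod.map (usub st.N st.px ij.1) (usub st.N st.py ij.2)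

lemma N_pos (st : Setup) : 0 < st.N := two_pos.trans_le st.hN

lemma K_pos (st : Setup) : 0 < st.K := two_pos.trans_le st.hK

lemma exists_Dij'_eq_rect (hij : ij ∈ idxS st.N) :
    ∃ α β, α + st.K ≤ st.N ∧ β + st.K ≤ st.N ∧
      Dij' st.N st.px st.py ij.1 ij.2 = rect st.N st.K α β := by
  obtain ⟨⟨hi, hiN⟩, hj, hjN⟩ := mem_idxS.1 hij
  obtain ⟨α, hα, hIx, -⟩ := exists_bijOn_cells st.N_pos st.K_pos hi (st.hpx _ hiN)
    (st.hpx _ ((Nat.sub_le _ 1).trans hiN)) (st.hKx _ hi hiN)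
  obtain ⟨β, hβ, hIy, -⟩ := exists_bijOn_cells st.N_pos st.K_pos hj (st.hpy _ hjN)
    (st.hpy _ ((Nat.sub_le _ 1).trans hjN)) (st.hKy _ hj hjN)
  exact ⟨α, β, hα, hβ, by rw [Dij', rect, hIx, hIy]⟩

lemma exists_bijOn_cellsIn (hij : ij ∈ idxS st.N) {c : ℕ} (hc : 0 < c) :
    ∃ Ψ : ℕ × ℕ → ℕ × ℕ,
      BijOn Ψ (cellsIn (c * st.N) (Dij' st.N st.px st.py ij.1 ij.2))
        (cellsIn (st.K * c * st.N) (Dij st.N ij.1 ij.2)) ∧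
      ∀ kl ∈ cellsIn (c * st.N) (Dij' st.N st.px st.py ij.1 ij.2),
        st.cellMap ij '' Dij (c * st.N) kl.1 kl.2 =
          Dij (st.K * c * st.N) (Ψ kl).1 (Ψ kl).2 := by
  obtain ⟨⟨hi, hiN⟩, hj, hjN⟩ := mem_idxS.1 hij
  obtain ⟨α, hα, hIx, hx⟩ := exists_bijOn_cells st.N_pos st.K_pos hi (st.hpx _ hiN)
    (st.hpx _ ((Nat.sub_le _ 1).trans hiN)) (st.hKx _ hi hiN)
  obtain ⟨β, hβ, hIy, hy⟩ := exists_bijOn_cells st.N_pos st.K_pos hj (st.hpy _ hjN)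
    (st.hpy _ ((Nat.sub_le _ 1).trans hjN)) (st.hKy _ hj hjN)
  obtain ⟨ψ, hψ, hψ_image⟩ := hx c hc
  obtain ⟨φ, hφ, hφ_image⟩ := hy c hc
  rw [Dij', hIx, hIy, cellsIn_prod hc st.N_pos hα hβ, Dij, Ii, Ii,
    cellsIn_prod (Nat.mul_pos st.K_pos hc) st.N_pos hiN hjN]
  refine ⟨fun kl => (ψ kl.1, φ kl.2), ?_, fun kl hkl => ?_⟩
  · simpa only [Finset.coe_product, Finset.coe_Ioc] using hψ.prodMap hφ
  · rw [Finset.mem_product, Finset.mem_Ioc, Finset.mem_Ioc] at hkl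
    rw [cellMap, Dij, prodMap_image_prod, hψ_image _ hkl.1, hφ_image _ hkl.2]
    rfl

lemma oscSum_Dij_succ (hij : ij ∈ idxS st.N) (φ : ℝ × ℝ → ℝ) (n : ℕ) :
    OscSum φ st.N st.K (n + 1) (Dij st.N ij.1 ij.2) =
      OscSum (φ ∘ st.cellMap ij) st.N st.K n (Dij' st.N st.px st.py ij.1 ij.2) := by
  obtain ⟨Ψ, hΨ, hΨ_image⟩ := exists_bijOn_cellsIn hij (pow_pos st.K_pos n)
  rw [oscSum_eq_sum_cellsIn, oscSum_eq_sum_cellsIn, pow_succ']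
  refine (Finset.sum_nbij Ψ hΨ.mapsTo hΨ.injOn hΨ.surjOn fun kl hkl => ?_).symm
  rw [← hΨ_image kl hkl, osc_image]

lemma isCompact_Dij' (st : Setup) (ij : ℕ × ℕ) :
    IsCompact (Dij' st.N st.px st.py ij.1 ij.2) :=
  isCompact_uIcc.prod isCompact_uIcc

lemma Dij'_subset_sq (hij : ij ∈ idxS st.N) : Dij' st.N st.px st.py ij.1 ij.2 ⊆ RFIS.sq := by
  obtain ⟨⟨hi, hiN⟩, hj, hjN⟩ := mem_idxS.1 hij
  exact prod_mono
    (uIcc_subset_Icc (xp_mem_Icc st.N_pos (st.hpx _ (by omega)))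
      (xp_mem_Icc st.N_pos (st.hpx _ hiN)))
    (uIcc_subset_Icc (xp_mem_Icc st.N_pos (st.hpy _ (by omega)))
      (xp_mem_Icc st.N_pos (st.hpy _ hjN)))

lemma mapsTo_cellMap (hij : ij ∈ idxS st.N) :
    MapsTo (st.cellMap ij) (Dij' st.N st.px st.py ij.1 ij.2) (Dij st.N ij.1 ij.2) := by
  obtain ⟨⟨hi, hiN⟩, hj, hjN⟩ := mem_idxS.1 hij
  have hx := xp_ne_xp_pred st.N_pos st.K_pos hi (st.hKx _ hi hiN)
  have hy := xp_ne_xp_pred st.N_pos st.K_pos hj (st.hKy _ hj hjN)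
  rw [mapsTo_iff_image_subset, cellMap, Dij', prodMap_image_prod,
    usub_image_Ii' hx, usub_image_Ii' hy, Dij]

lemma isBilinearOn_comp_cellMap (hij : ij ∈ idxS st.N) {F : ℝ × ℝ → ℝ}
    (hF : IsBilinearOn F (Dij st.N ij.1 ij.2)) :
    IsBilinearOn (F ∘ st.cellMap ij) (Dij' st.N st.px st.py ij.1 ij.2) :=
  hF.comp_affine (exists_usub_eq_affine _ _ _) (exists_usub_eq_affine _ _ _) (mapsTo_cellMap hij)

lemma isBilinearOn_abs_S (hsteady : Steady st) (hij : ij ∈ idxS st.N) :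
    IsBilinearOn (fun p => |st.S p|) (Dij st.N ij.1 ij.2) := by
  obtain ⟨⟨hi, hiN⟩, hj, hjN⟩ := mem_idxS.1 hij
  have hi' := (Nat.sub_le ij.1 1).trans hiN
  have hj' := (Nat.sub_le ij.2 1).trans hjN
  refine (st.hSbil _ _ hi hiN hj hjN).abs_of_sameSign_corners ?_
  simpa only [mem_insert_iff, mem_singleton_iff, forall_eq_or_imp, forall_eq,
    st.hSval _ hi' _ hj', st.hSval _ hi' _ hjN, st.hSval _ hiN _ hj', st.hSval _ hiN _ hjN,
    and_assoc] using hsteady _ _ hi hiN hj hjN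

lemma exists_abs_osc_sub_le (hij : ij ∈ idxS st.N) :
    ∃ C : ℝ, 0 ≤ C ∧ ∀ M, ∀ kl ∈ cellsIn M (Dij' st.N st.px st.py ij.1 ij.2),
      |Osc (st.f ∘ st.cellMap ij) (Dij M kl.1 kl.2)
          - |st.S (st.cellMap ij (xg M kl.1, xg M kl.2))| * Osc st.f (Dij M kl.1 kl.2)|
        ≤ C * (1 / M) := by
  obtain ⟨⟨hi, hiN⟩, hj, hjN⟩ := mem_idxS.1 hij
  have hcpt := st.isCompact_Dij' ij
  have hf := st.hfcont.mono (Dij'_subset_sq hij)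
  obtain ⟨Ls, hs⟩ := (isBilinearOn_comp_cellMap hij
    (st.hSbil _ _ hi hiN hj hjN)).exists_lipschitzOnWith hcpt.isBounded
  obtain ⟨Lh, hh⟩ := (isBilinearOn_comp_cellMap hij
    (st.hhbil _ _ hi hiN hj hjN)).exists_lipschitzOnWith hcpt.isBounded
  obtain ⟨Lg, hg⟩ := (st.hgbil _ _ hi hiN hj hjN).exists_lipschitzOnWith hcpt.isBounded
  obtain ⟨Ws, hWs⟩ := hcpt.exists_bound_of_continuousOn hs.continuousOn
  obtain ⟨W, hW⟩ := hcpt.exists_bound_of_continuousOn (hf.sub hg.continuousOn)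
  have hne : (xp st.N st.px ij.1, xp st.N st.py ij.2) ∈ Dij' st.N st.px st.py ij.1 ij.2 :=
    ⟨right_mem_uIcc, right_mem_uIcc⟩
  have hWs₀ := (norm_nonneg _).trans (hWs _ hne)
  have hW₀ := (norm_nonneg _).trans (hW _ hne)
  refine ⟨2 * Ls * W + Ws * Lg + Lh, by positivity, fun M kl hkl => ?_⟩
  obtain ⟨hklM, hsub⟩ := mem_cellsIn.1 hkl
  have hcorner : (xg M kl.1, xg M kl.2) ∈ Dij M kl.1 kl.2 := ⟨xg_mem_Ii _ _, xg_mem_Ii _ _⟩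
  refine (abs_osc_sub_mul_osc_le hcorner (fun p hp q hq => dist_le_of_mem_Dij hklM hp hq)
    (hs.mono hsub) (hg.mono hsub) (hh.mono hsub)
    ((hcpt.image_of_continuousOn hf).isBounded.subset (image_mono hsub))
    (fun p hp => hW p (hsub hp)) fun p hp => st.hfeq _ _ hi hiN hj hjN p (hsub hp)).trans ?_
  gcongr
  exact hWs _ (hsub hcorner)

lemma exists_abs_oscSum_sub_le (hij : ij ∈ idxS st.N) :
    ∃ C : ℝ, 0 ≤ C ∧ ∀ n : ℕ,
      |OscSum st.f st.N st.K (n + 1) (Dij st.N ij.1 ij.2)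
          - ∑ kl ∈ cellsIn (st.K ^ n * st.N) (Dij' st.N st.px st.py ij.1 ij.2),
              |st.S (st.cellMap ij (xg (st.K ^ n * st.N) kl.1, xg (st.K ^ n * st.N) kl.2))|
                * Osc st.f (Dij (st.K ^ n * st.N) kl.1 kl.2)|
        ≤ C * (st.K : ℝ) ^ n := by
  obtain ⟨C, hC, hosc⟩ := exists_abs_osc_sub_le hij
  refine ⟨C * st.N, by positivity, fun n => ?_⟩
  rw [oscSum_Dij_succ hij, oscSum_eq_sum_cellsIn, ← Finset.sum_sub_distrib]
  have hM : ((st.K ^ n * st.N : ℕ) : ℝ) ≠ 0 :=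
    Nat.cast_ne_zero.2 (Nat.mul_pos (pow_pos st.K_pos n) st.N_pos).ne'
  calc _ ≤ ∑ kl ∈ cellsIn (st.K ^ n * st.N) (Dij' st.N st.px st.py ij.1 ij.2),
          C * (1 / (st.K ^ n * st.N : ℕ)) :=
        (Finset.abs_sum_le_sum_abs _ _).trans (Finset.sum_le_sum (hosc _))
    _ ≤ ((st.K ^ n * st.N : ℕ) : ℝ) ^ 2 * (C * (1 / (st.K ^ n * st.N : ℕ))) := by
        rw [Finset.sum_const, nsmul_eq_mul]
        gcongr
        exact_mod_cast card_cellsIn_le _ _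
    _ = C * st.N * (st.K : ℝ) ^ n := by
        field_simp
        push_cast
        ring

end Setup

/-! ### Compatible partitions and uniform sums -/

section Partition

variable {st : Setup} {m M c α β : ℕ} {B : Fin m → Set (ℝ × ℝ)} {γ : Fin m → Fin m → ℝ}
  {r t : Fin m} {ij ij' kl : ℕ × ℕ} {p : ℝ × ℝ}

lemma mem_Lam : ij ∈ Lam st B r ↔ ij ∈ idxS st.N ∧ Dij st.N ij.1 ij.2 ⊆ B r := by
  simp only [Lam, Finset.mem_filter]

lemma mem_Lam' : ij ∈ Lam' st B t ↔ ij ∈ idxS st.N ∧ Dij' st.N st.px st.py ij.1 ij.2 ⊆ B t := by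
  simp only [Lam', Finset.mem_filter]

lemma mem_LamAB : ij ∈ LamAB st B r α β ↔
    ij ∈ Lam st B r ∧ Dij' st.N st.px st.py ij.1 ij.2 = rect st.N st.K α β := by
  simp only [LamAB, Finset.mem_filter]

lemma IsPartition.eq_of_mem_cellsIn (hpart : IsPartition m B) (hr : kl ∈ cellsIn M (B r))
    (ht : kl ∈ cellsIn M (B t)) : r = t := by
  by_contra hrt
  exact Finset.disjoint_left.1 (disjoint_cellsIn (hpart.2.2 r t hrt)) hr ht

lemma cellsIn_eq_biUnion (hpart : IsPartition m B) (hcomp : IsCompatible st B) (hc : 0 < c) :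
    cellsIn (c * st.N) (B r) =
      (Lam st B r).biUnion fun ij => cellsIn (c * st.N) (Dij st.N ij.1 ij.2) := by
  ext kl
  simp only [Finset.mem_biUnion, mem_cellsIn, mem_Lam]
  constructor
  · rintro ⟨hkl, hsub⟩
    obtain ⟨ij, hij, hparent⟩ := exists_Dij_superset hc st.N_pos hkl
    obtain ⟨⟨hi, hiN⟩, hj, hjN⟩ := mem_idxS.1 hij
    obtain ⟨t, ht⟩ := (hcomp.1 _ _ hi hiN hj hjN).1
    obtain rfl : r = t := hpart.eq_of_mem_cellsIn (mem_cellsIn.2 ⟨hkl, hsub⟩)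
      (mem_cellsIn.2 ⟨hkl, hparent.trans ht⟩)
    exact ⟨ij, ⟨hij, ht⟩, hkl, hparent⟩
  · rintro ⟨ij, ⟨-, hr⟩, hkl, hparent⟩
    exact ⟨hkl, hparent.trans hr⟩

lemma oscSum_eq_sum_Lam (hpart : IsPartition m B) (hcomp : IsCompatible st B) (f : ℝ × ℝ → ℝ)
    (n : ℕ) (r : Fin m) :
    OscSum f st.N st.K n (B r) =
      ∑ ij ∈ Lam st B r, OscSum f st.N st.K n (Dij st.N ij.1 ij.2) := by
  simp only [oscSum_eq_sum_cellsIn]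
  rw [cellsIn_eq_biUnion hpart hcomp (pow_pos st.K_pos n), Finset.sum_biUnion]
  exact fun ij _ ij' _ hne => disjoint_cellsIn (interior_Dij_inter_interior_Dij hne)

lemma Dij_subset_rect_of_mem_interior {N K : ℕ} (hc : 0 < c) (hkl : kl ∈ idxS (c * N))
    (hp : p ∈ interior (Dij (c * N) kl.1 kl.2)) (hpR : p ∈ rect N K α β) :
    Dij (c * N) kl.1 kl.2 ⊆ rect N K α β := by
  obtain ⟨⟨hk, hkM⟩, hl, -⟩ := mem_idxS.1 hkl
  rw [Dij, interior_prod_eq] at hp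
  simp only [rect, ← xg_mul_mul_left hc N] at hpR ⊢
  exact prod_mono (Ii_subset_Icc_of_mem_interior (hk.trans hkM) hk hp.1 hpR.1)
    (Ii_subset_Icc_of_mem_interior (hk.trans hkM) hl hp.2 hpR.2)

lemma exists_Dij'_of_mem_cellsIn (hcomp : IsCompatible st B) (hc : 0 < c)
    (hne : (Lam st B r ∩ Lam' st B t).Nonempty) (hkl : kl ∈ cellsIn (c * st.N) (B t)) :
    ∃ ij ∈ Lam st B r ∩ Lam' st B t,
      kl ∈ cellsIn (c * st.N) (Dij' st.N st.px st.py ij.1 ij.2) := by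
  obtain ⟨ij₀, hij₀⟩ := hne
  obtain ⟨hΛ, hΛ'⟩ := Finset.mem_inter.1 hij₀
  obtain ⟨hidx, hsubr⟩ := mem_Lam.1 hΛ
  obtain ⟨⟨hi, hiN⟩, hj, hjN⟩ := mem_idxS.1 hidx
  obtain ⟨hklM, hsub⟩ := mem_cellsIn.1 hkl
  obtain ⟨p, hp⟩ := interior_Dij_nonempty hklM
  have hpB := hsub (interior_subset hp)
  rw [hcomp.2 r t ⟨_, _, hi, hiN, hj, hjN, hsubr, (mem_Lam'.1 hΛ').2⟩] at hpB
  simp only [mem_iUnion] at hpB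
  obtain ⟨i, j, ⟨hi, hiN, hj, hjN, hr, ht⟩, hpD⟩ := hpB
  have hij : (i, j) ∈ idxS st.N := mem_idxS.2 ⟨⟨hi, hiN⟩, hj, hjN⟩
  obtain ⟨α, β, -, -, hrect⟩ := Setup.exists_Dij'_eq_rect hij
  refine ⟨(i, j), Finset.mem_inter.2 ⟨mem_Lam.2 ⟨hij, hr⟩, mem_Lam'.2 ⟨hij, ht⟩⟩,
    mem_cellsIn.2 ⟨hklM, ?_⟩⟩
  rw [hrect] at hpD ⊢
  exact Dij_subset_rect_of_mem_interior hc hklM hp hpD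

lemma Dij'_eq_of_mem_cellsIn (hij : ij ∈ idxS st.N) (hij' : ij' ∈ idxS st.N)
    (hkl : kl ∈ cellsIn M (Dij' st.N st.px st.py ij.1 ij.2))
    (hkl' : kl ∈ cellsIn M (Dij' st.N st.px st.py ij'.1 ij'.2)) :
    Dij' st.N st.px st.py ij.1 ij.2 = Dij' st.N st.px st.py ij'.1 ij'.2 := by
  obtain ⟨⟨hi, hiN⟩, hj, hjN⟩ := mem_idxS.1 hij
  obtain ⟨⟨hi', hiN'⟩, hj', hjN'⟩ := mem_idxS.1 hij'
  exact (st.hdisj _ _ _ _ hi hiN hj hjN hi' hiN' hj' hjN').resolve_right fun h =>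
    Finset.disjoint_left.1 (disjoint_cellsIn h) hkl hkl'

lemma sum_LamAB_abs_S (hsteady : Steady st) (hus : HasUniformSums st B γ) (hα : α + st.K ≤ st.N)
    (hβ : β + st.K ≤ st.N) (hij : ij ∈ Lam st B r ∩ Lam' st B t)
    (hrect : Dij' st.N st.px st.py ij.1 ij.2 = rect st.N st.K α β)
    (hp : p ∈ rect st.N st.K α β) :
    ∑ ij ∈ LamAB st B r α β, |st.S (st.cellMap ij p)| = γ r t := by
  have hbil : IsBilinearOn (fun p => ∑ ij ∈ LamAB st B r α β, |st.S (st.cellMap ij p)|)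
      (rect st.N st.K α β) := IsBilinearOn.sum fun ij hij => by
    obtain ⟨hΛ, hrect⟩ := mem_LamAB.1 hij
    have hidx := (mem_Lam.1 hΛ).1
    exact hrect ▸ Setup.isBilinearOn_comp_cellMap hidx (Setup.isBilinearOn_abs_S hsteady hidx)
  refine hbil.eq_of_eq_corners ?_ hp
  obtain ⟨h₀₀, h₁₀, h₀₁, h₁₁⟩ := hus r t ⟨ij, hij⟩ α β hα hβ ⟨ij, hij, hrect⟩
  simp only [mem_insert_iff, mem_singleton_iff, forall_eq_or_imp, forall_eq]
  exact ⟨⟨h₀₀, h₀₁⟩, h₁₀, h₁₁⟩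

open Classical in
lemma sum_abs_S_of_mem_cellsIn (hpart : IsPartition m B) (hcomp : IsCompatible st B)
    (hsteady : Steady st) (hus : HasUniformSums st B γ) (hγ0 : GammaZero st B γ) (hc : 0 < c)
    (hkl : kl ∈ cellsIn (c * st.N) (B t)) (hp : p ∈ Dij (c * st.N) kl.1 kl.2) :
    ∑ ij ∈ Lam st B r with kl ∈ cellsIn (c * st.N) (Dij' st.N st.px st.py ij.1 ij.2),
      |st.S (st.cellMap ij p)| = γ r t := by
  rcases (Lam st B r ∩ Lam' st B t).eq_empty_or_nonempty with hempty | hne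
  · rw [hγ0 r t hempty, Finset.filter_false_of_mem, Finset.sum_empty]
    intro ij hΛ hkl'
    have hidx := (mem_Lam.1 hΛ).1
    obtain ⟨⟨hi, hiN⟩, hj, hjN⟩ := mem_idxS.1 hidx
    obtain ⟨t', ht'⟩ := (hcomp.1 _ _ hi hiN hj hjN).2
    obtain ⟨hklM, hsub⟩ := mem_cellsIn.1 hkl'
    obtain rfl := hpart.eq_of_mem_cellsIn hkl (mem_cellsIn.2 ⟨hklM, hsub.trans ht'⟩)
    exact Finset.notMem_empty ij (hempty ▸ Finset.mem_inter.2 ⟨hΛ, mem_Lam'.2 ⟨hidx, ht'⟩⟩)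
  · obtain ⟨ij, hij, hklD⟩ := exists_Dij'_of_mem_cellsIn hcomp hc hne hkl
    have hidx := (mem_Lam.1 (Finset.mem_inter.1 hij).1).1
    obtain ⟨α, β, hα, hβ, hrect⟩ := Setup.exists_Dij'_eq_rect hidx
    rw [← sum_LamAB_abs_S hsteady hus hα hβ hij hrect (hrect ▸ (mem_cellsIn.1 hklD).2 hp), LamAB]
    congr 1
    refine Finset.filter_congr fun ij' hΛ => ⟨fun hkl' => ?_, fun h => ?_⟩
    · rw [← hrect, Dij'_eq_of_mem_cellsIn (mem_Lam.1 hΛ).1 hidx hkl' hklD]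
    · rwa [h, ← hrect]

lemma sum_Lam_sum_cellsIn_Dij' (hpart : IsPartition m B) (hcomp : IsCompatible st B)
    (hsteady : Steady st) (hus : HasUniformSums st B γ) (hγ0 : GammaZero st B γ) (hc : 0 < c)
    (r : Fin m) (w : ℕ × ℕ → ℝ) :
    ∑ ij ∈ Lam st B r, ∑ kl ∈ cellsIn (c * st.N) (Dij' st.N st.px st.py ij.1 ij.2),
        |st.S (st.cellMap ij (xg (c * st.N) kl.1, xg (c * st.N) kl.2))| * w kl =
      ∑ t, γ r t * ∑ kl ∈ cellsIn (c * st.N) (B t), w kl := by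
  classical
  rw [Finset.sum_comm' (t' := Finset.univ.biUnion fun t => cellsIn (c * st.N) (B t))
      (s' := fun kl => {ij ∈ Lam st B r |
        kl ∈ cellsIn (c * st.N) (Dij' st.N st.px st.py ij.1 ij.2)}),
    Finset.sum_biUnion fun t _ t' _ htt' => disjoint_cellsIn (hpart.2.2 t t' htt')]
  · refine Finset.sum_congr rfl fun t _ => ?_
    rw [Finset.mul_sum]
    refine Finset.sum_congr rfl fun kl hkl => ?_
    rw [← Finset.sum_mul, sum_abs_S_of_mem_cellsIn hpart hcomp hsteady hus hγ0 hc hkl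
      ⟨xg_mem_Ii _ _, xg_mem_Ii _ _⟩]
  · intro ij kl
    simp only [Finset.mem_filter, Finset.mem_biUnion, Finset.mem_univ, true_and]
    refine ⟨fun ⟨hΛ, hkl⟩ => ⟨⟨hΛ, hkl⟩, ?_⟩, And.left⟩
    obtain ⟨⟨hi, hiN⟩, hj, hjN⟩ := mem_idxS.1 (mem_Lam.1 hΛ).1
    obtain ⟨t, ht⟩ := (hcomp.1 _ _ hi hiN hj hjN).2
    obtain ⟨hklM, hsub⟩ := mem_cellsIn.1 hkl
    exact ⟨t, mem_cellsIn.2 ⟨hklM, hsub.trans ht⟩⟩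

end Partition

end RFIS

open RFIS in
/-- **Lemma 4.3.**  If the vertical scaling factors are steady and have uniform sums
`γ_{rt}` under a compatible partition (with `γ_{rt} = 0` when `Λ_r ∩ Λ'_t = ∅`), then there
is a constant `C > 0` such that
`|O(f, n+1, B_r) − Σ_t γ_{rt} O(f, n, B_t)| ≤ C Kⁿ` for all `r` and all `n ≥ 1`. -/
theorem oscillation_recursion (st : Setup) (m : ℕ) (B : Fin m → Set (ℝ × ℝ))
    (γ : Fin m → Fin m → ℝ) (hpart : IsPartition m B) (hcomp : IsCompatible st B)
    (hsteady : Steady st) (hus : HasUniformSums st B γ) (hγ0 : GammaZero st B γ) :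
    ∃ C : ℝ, 0 < C ∧ ∀ r : Fin m, ∀ n : ℕ, 1 ≤ n →
      |OscSum st.f st.N st.K (n + 1) (B r)
          - ∑ t : Fin m, γ r t * OscSum st.f st.N st.K n (B t)|
        ≤ C * (st.K : ℝ) ^ n := by
  choose! C hC hCn using fun ij (hij : ij ∈ idxS st.N) => Setup.exists_abs_oscSum_sub_le hij
  have hΛ : ∀ r, Lam st B r ⊆ idxS st.N := fun _ _ h => (mem_Lam.1 h).1
  refine ⟨∑ ij ∈ idxS st.N, C ij + 1, by have := Finset.sum_nonneg hC; positivity,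
    fun r n _ => ?_⟩
  simp only [oscSum_eq_sum_cellsIn st.f st.N st.K n]
  rw [← sum_Lam_sum_cellsIn_Dij' hpart hcomp hsteady hus hγ0 (pow_pos st.K_pos n) r,
    oscSum_eq_sum_Lam hpart hcomp, ← Finset.sum_sub_distrib]
  calc _ ≤ ∑ ij ∈ Lam st B r, C ij * (st.K : ℝ) ^ n :=
        (Finset.abs_sum_le_sum_abs _ _).trans
          (Finset.sum_le_sum fun ij hij => hCn ij (hΛ r hij) n)
    _ ≤ ∑ ij ∈ idxS st.N, C ij * (st.K : ℝ) ^ n :=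
        Finset.sum_le_sum_of_subset_of_nonneg (hΛ r) fun ij hij _ =>
          mul_nonneg (hC ij hij) (by positivity)
    _ ≤ (∑ ij ∈ idxS st.N, C ij + 1) * (st.K : ℝ) ^ n := by
        rw [← Finset.sum_mul]
        gcongr
        exact le_add_of_nonneg_right zero_le_one
end
end
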